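/- Let θ ∈ (0, 1/2] be such that θ⁻¹ ≥ 2 is an integer, and let U : S_{T[θ,S₁]} → S_{T[θ,S₁]} be a surjective isometry of the unit sphere of T[θ, S₁]. Then there exist a sequence (ε_i)_{i=1}^∞ with values in {−1, 1} and a permutation π of {1, 2, …, θ⁻¹} such that U(e_i) = ε_i e_{π(i)} for 1 ≤ i ≤ θ⁻¹ and U(e_i) = ε_i e_i for i > θ⁻¹. -/

import Mathlib

open scoped BigOperators

noncomputable section

/-- Projection of a finitely supported vector onto the coordinates in `E`. -/
def tsProj (E : Finset ℕ+) (x : ℕ+ →₀ ℝ) : ℕ+ →₀ ℝ :=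
  x.filter fun i => i ∈ E

/-- The Schreier families `S_n` on the positive integers:
`S₁` consists of the sets `F` with `|F| ≤ min F` (together with `∅`), and `S_{n+1}`
consists of unions `F₁ ∪ ⋯ ∪ F_d` of nonempty members `F₁ < ⋯ < F_d` of `S_n`
with `d ≤ min F₁` (together with `∅`). -/
def Schreier : ℕ → Set (Finset ℕ+)
  | 0 => {F | F.card ≤ 1}
  | 1 => {F | ∀ a ∈ F, F.card ≤ (a : ℕ)}
  | n + 2 =>
      {F | F = ∅ ∨
        ∃ (d : ℕ) (G : Fin d → Finset ℕ+),
          0 < d ∧ (∀ i, G i ∈ Schreier (n + 1)) ∧ (∀ i, (G i).Nonempty) ∧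
          (∀ i j : Fin d, i < j → ∀ a ∈ G i, ∀ b ∈ G j, a < b) ∧
          (∀ i, ∀ a ∈ G i, d ≤ (a : ℕ)) ∧ F = Finset.univ.biUnion G}

/-- A tuple of nonempty finite sets `E 0 < E 1 < ⋯` whose set of minima belongs to `S`. -/
def TsAdmissible (S : Set (Finset ℕ+)) {d : ℕ} (E : Fin d → Finset ℕ+) : Prop :=
  (∀ i, (E i).Nonempty) ∧
  (∀ i j : Fin d, i < j → ∀ a ∈ E i, ∀ b ∈ E j, a < b) ∧
  ∃ μ : Fin d → ℕ+, (∀ i, IsLeast (↑(E i) : Set ℕ+) (μ i)) ∧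
    Finset.univ.image μ ∈ S

/-- The iterated norms `‖·‖_m` in the construction of the Tsirelson norm:
`‖x‖₀` is the supremum norm and
`‖x‖_{m+1} = max(‖x‖_m, sup{θ ∑ᵢ ‖Eᵢ x‖_m : E₁ < ⋯ < E_d, {min Eᵢ} ∈ S})`. -/
def tnormAux (θ : ℝ) (S : Set (Finset ℕ+)) : ℕ → (ℕ+ →₀ ℝ) → ℝ
  | 0, x => ⨆ i, |x i|
  | m + 1, x =>
      max (tnormAux θ S m x)
        (sSup {r : ℝ | ∃ (d : ℕ) (E : Fin d → Finset ℕ+), TsAdmissible S E ∧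
          r = θ * ∑ i, tnormAux θ S m (tsProj (E i) x)})

/-- The Tsirelson norm `‖x‖_{θ,S} = sup_m ‖x‖_m` on `c₀₀`. -/
def tnorm (θ : ℝ) (S : Set (Finset ℕ+)) (x : ℕ+ →₀ ℝ) : ℝ :=
  ⨆ m : ℕ, tnormAux θ S m x

/-- `X`, together with the sequence `e` of unit vectors, is (a realization of) the
Tsirelson space `T[θ, S_n]`: a Banach space containing `c₀₀` isometrically
(w.r.t. the Tsirelson norm) as a dense subspace, in which `(e i)` is a
(1-unconditional) basis, i.e. every `x` has a unique expansion `x = ∑ᵢ aᵢ eᵢ`. -/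
structure IsTsirelsonSpace (θ : ℝ) (n : ℕ) (X : Type*) [NormedAddCommGroup X]
    [NormedSpace ℝ X] (e : ℕ+ → X) : Prop where
  complete : CompleteSpace X
  norm_embed : ∀ a : ℕ+ →₀ ℝ, ‖a.sum fun i c => c • e i‖ = tnorm θ (Schreier n) a
  dense_embed : DenseRange fun a : ℕ+ →₀ ℝ => a.sum fun i c => c • e i
  expansion : ∀ x : X, ∃! a : ℕ+ → ℝ, HasSum (fun i => a i • e i) x

/-!
An isometry of the sphere only sees distances between unit vectors, so one looks for a metric
description of `±e i`. The distance of a unit vector `y` to `-e i` is `2` exactly when the `i`-th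
coordinate of `y` is `1`, and every unit vector at distance less than `1 - θ` from `e i` has this
property. Conversely, around a point `x` where the metric behaves in this way the sphere coincides
with a hyperplane, say with normal `f`. Moving `x` along a basis vector bounds `|x i|` from both
sides whenever `|x i| < 1` and `f (e i) ≠ 0`, and if this held for all such `i` then `θ = 1 / 2`,
which is excluded by counting the support of `f` against the Schreier condition. Thus `x` has a
coordinate of modulus one and, by the remaining metric conditions, no other coordinate.

Hence the isometry permutes the vectors `±e i`. Indices `p` with `θ p ≤ 1` behave as in an
`ℓ^∞`-sum, whereas for larger `p` the vector `e p + ∑ b ∈ C, e b` with `p` far indices `b` has norm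
at most `θ p`. Mapping `p` to a larger index would raise the norm to at least `θ (p + 1)`, because
the images of `p` and `C` together form a Schreier set.
-/

open Filter Function Metric Topology

section TsirelsonNorm

variable {θ C : ℝ} {S : Set (Finset ℕ+)} {m d : ℕ} {E : Fin d → Finset ℕ+} {x y : ℕ+ →₀ ℝ}

lemma tsProj_apply (F : Finset ℕ+) (x : ℕ+ →₀ ℝ) (i : ℕ+) :
    tsProj F x i = if i ∈ F then x i else 0 := by
  simp only [tsProj, Finsupp.filter_apply]

lemma tsProj_add (F : Finset ℕ+) (x y : ℕ+ →₀ ℝ) : tsProj F (x + y) = tsProj F x + tsProj F y :=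
  Finsupp.filter_add

lemma tsProj_erase_of_notMem {F : Finset ℕ+} {p : ℕ+} (hp : p ∉ F) (x : ℕ+ →₀ ℝ) :
    tsProj F (x.erase p) = tsProj F x := by
  ext i
  by_cases hi : i = p <;> simp [tsProj_apply, hi, hp]

lemma abs_tsProj_apply_le (F : Finset ℕ+) (x : ℕ+ →₀ ℝ) (i : ℕ+) : |tsProj F x i| ≤ |x i| := by
  rw [tsProj_apply]
  split_ifs <;> simp

/-- The `ℓ¹` norm on `c₀₀`, which dominates the Tsirelson norms. -/
def ellOneNorm (x : ℕ+ →₀ ℝ) : ℝ := x.sum fun _ c => |c|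

lemma ellOneNorm_nonneg (x : ℕ+ →₀ ℝ) : 0 ≤ ellOneNorm x :=
  Finset.sum_nonneg fun _ _ => abs_nonneg _

lemma abs_apply_le_ellOneNorm (x : ℕ+ →₀ ℝ) (i : ℕ+) : |x i| ≤ ellOneNorm x := by
  by_cases hi : i ∈ x.support
  · exact Finset.single_le_sum (f := fun j => |x j|) (fun _ _ => abs_nonneg _) hi
  · simpa [Finsupp.notMem_support_iff.1 hi] using ellOneNorm_nonneg x

@[simp]
lemma ellOneNorm_single (a : ℕ+) (t : ℝ) : ellOneNorm (Finsupp.single a t) = |t| :=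
  Finsupp.sum_single_index abs_zero

lemma ellOneNorm_tsProj (F : Finset ℕ+) (x : ℕ+ →₀ ℝ) :
    ellOneNorm (tsProj F x) = ∑ i ∈ x.support with i ∈ F, |x i| := by
  rw [ellOneNorm, Finsupp.sum, tsProj, Finsupp.support_filter]
  exact Finset.sum_congr rfl fun i hi => by
    rw [Finsupp.filter_apply_pos _ _ (Finset.mem_filter.1 hi).2]

lemma ellOneNorm_le_card {s : Finset ℕ+} (hs : x.support ⊆ s) (hx : ∀ i, |x i| ≤ 1) :
    ellOneNorm x ≤ s.card := by
  rw [ellOneNorm, Finsupp.sum_of_support_subset x hs _ fun _ _ => abs_zero]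
  simpa using Finset.sum_le_sum fun i (_ : i ∈ s) => hx i

lemma sum_sum_filter_mem_le {ι α : Type*} [Fintype ι] [DecidableEq α] {E : ι → Finset α}
    (hE : Pairwise (Disjoint on E)) {s : Finset α} {g : α → ℝ} (hg : ∀ a ∈ s, 0 ≤ g a) :
    ∑ i, ∑ a ∈ s with a ∈ E i, g a ≤ ∑ a ∈ s, g a := by
  rw [← Finset.sum_biUnion]
  · exact Finset.sum_le_sum_of_subset_of_nonneg
      (Finset.biUnion_subset.2 fun _ _ => Finset.filter_subset _ _) fun a ha _ => hg a ha
  · exact fun i _ j _ hij => Finset.disjoint_left.2 fun a hi hj =>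
      Finset.disjoint_left.1 (hE hij) (Finset.mem_filter.1 hi).2 (Finset.mem_filter.1 hj).2

namespace TsAdmissible

lemma pairwise_disjoint (hE : TsAdmissible S E) : Pairwise (Disjoint on E) :=
  pairwise_disjoint_on E |>.2 fun i j hij => Finset.disjoint_left.2 fun a hi hj =>
    (hE.2.1 i j hij a hi a hj).false

lemma sum_ellOneNorm_tsProj_le (hE : TsAdmissible S E) (x : ℕ+ →₀ ℝ) :
    ∑ i, ellOneNorm (tsProj (E i) x) ≤ ellOneNorm x := by
  simp only [ellOneNorm_tsProj]
  exact sum_sum_filter_mem_le hE.pairwise_disjoint fun _ _ => abs_nonneg _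

lemma sum_card_filter_mem_le (hE : TsAdmissible S E) (s : Finset ℕ+) :
    ∑ i, ({a ∈ s | a ∈ E i}.card : ℝ) ≤ s.card := by
  simpa using sum_sum_filter_mem_le (s := s) hE.pairwise_disjoint fun _ _ => zero_le_one

lemma card_le (hE : TsAdmissible (Schreier 1) E) {i : Fin d} {p : ℕ+} (hp : p ∈ E i) :
    d ≤ (p : ℕ) := by
  obtain ⟨-, -, μ, hμ, hS⟩ := id hE
  have hμinj : Injective μ := fun i j hij => hE.pairwise_disjoint.eq <|
    Finset.not_disjoint_iff.2 ⟨μ i, (hμ i).1, hij ▸ (hμ j).1⟩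
  calc d = (Finset.univ.image μ).card := by simp [Finset.card_image_of_injective _ hμinj]
    _ ≤ μ i := hS _ (Finset.mem_image_of_mem _ (Finset.mem_univ i))
    _ ≤ p := (hμ i).2 hp

lemma of_singletons {B : Finset ℕ+} (hB : B ∈ S) :
    TsAdmissible S fun i : Fin B.card => {B.orderEmbOfFin rfl i} := by
  refine ⟨fun _ => Finset.singleton_nonempty _, fun i j hij a ha b hb => ?_,
    B.orderEmbOfFin rfl, fun i => by simp, ?_⟩
  · rw [Finset.mem_singleton.1 ha, Finset.mem_singleton.1 hb]
    exact (B.orderEmbOfFin rfl).strictMono hij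
  · rwa [Finset.image_orderEmbOfFin_univ]

end TsAdmissible

lemma tnormAux_nonneg (x : ℕ+ →₀ ℝ) : 0 ≤ tnormAux θ S m x := by
  induction m with
  | zero => exact Real.iSup_nonneg fun i => abs_nonneg _
  | succ m ih => exact le_max_of_le_left ih

lemma mul_sum_tnormAux_le_of_le_ellOneNorm (hθ1 : θ ≤ 1)
    (hE : TsAdmissible S E) (h : ∀ y, tnormAux θ S m y ≤ ellOneNorm y) (x : ℕ+ →₀ ℝ) :
    θ * ∑ i, tnormAux θ S m (tsProj (E i) x) ≤ ellOneNorm x :=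
  calc θ * ∑ i, tnormAux θ S m (tsProj (E i) x)
      ≤ 1 * ∑ i, ellOneNorm (tsProj (E i) x) := by
        gcongr
        exacts [Finset.sum_nonneg fun _ _ => tnormAux_nonneg _, h _]
    _ ≤ ellOneNorm x := by simpa using hE.sum_ellOneNorm_tsProj_le x

lemma tnormAux_le_ellOneNorm (hθ1 : θ ≤ 1) (m : ℕ) (x : ℕ+ →₀ ℝ) :
    tnormAux θ S m x ≤ ellOneNorm x := by
  induction m generalizing x with
  | zero => exact ciSup_le fun i => abs_apply_le_ellOneNorm x i
  | succ m ih =>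
    refine max_le (ih x) (Real.sSup_le ?_ (ellOneNorm_nonneg x))
    rintro r ⟨d, E, hE, rfl⟩
    exact mul_sum_tnormAux_le_of_le_ellOneNorm hθ1 hE ih x

lemma tnormAux_succ_le_iff (hθ1 : θ ≤ 1) :
    tnormAux θ S (m + 1) x ≤ C ↔ tnormAux θ S m x ≤ C ∧
      ∀ {d : ℕ} (E : Fin d → Finset ℕ+), TsAdmissible S E →
        θ * ∑ i, tnormAux θ S m (tsProj (E i) x) ≤ C := by
  constructor
  · refine fun h => ⟨(le_max_left _ _).trans h, fun {d} E hE => ?_⟩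
    refine le_trans ?_ ((le_max_right _ _).trans h)
    refine le_csSup ⟨ellOneNorm x, ?_⟩ ⟨d, E, hE, rfl⟩
    rintro r ⟨d, E, hE, rfl⟩
    exact mul_sum_tnormAux_le_of_le_ellOneNorm hθ1 hE (tnormAux_le_ellOneNorm hθ1 m) x
  · rintro ⟨h, hsum⟩
    refine max_le h (Real.sSup_le ?_ ((tnormAux_nonneg x).trans h))
    rintro r ⟨d, E, hE, rfl⟩
    exact hsum E hE

lemma tnormAux_monotone (x : ℕ+ →₀ ℝ) : Monotone fun m => tnormAux θ S m x :=
  monotone_nat_of_le_succ fun _ => le_max_left _ _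

lemma abs_apply_le_tnormAux (m : ℕ) (x : ℕ+ →₀ ℝ) (i : ℕ+) : |x i| ≤ tnormAux θ S m x := by
  have hbdd : BddAbove (Set.range fun j => |x j|) :=
    ⟨ellOneNorm x, Set.forall_mem_range.2 (abs_apply_le_ellOneNorm x)⟩
  exact (le_ciSup hbdd i).trans (tnormAux_monotone x m.zero_le)

lemma tnormAux_mono (hθ0 : 0 ≤ θ) (hθ1 : θ ≤ 1) (m : ℕ) (h : ∀ i, |x i| ≤ |y i|) :
    tnormAux θ S m x ≤ tnormAux θ S m y := by
  induction m generalizing x y with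
  | zero => exact ciSup_le fun i => (h i).trans (abs_apply_le_tnormAux 0 y i)
  | succ m ih =>
    obtain ⟨hm, hsum⟩ := (tnormAux_succ_le_iff (S := S) (m := m) (x := y) hθ1).1 le_rfl
    refine (tnormAux_succ_le_iff hθ1).2 ⟨(ih h).trans hm, fun E hE => ?_⟩
    refine le_trans ?_ (hsum E hE)
    gcongr with i
    refine ih fun j => ?_
    rw [tsProj_apply, tsProj_apply]
    split_ifs
    exacts [h j, le_rfl]

lemma tnormAux_add_le (hθ0 : 0 ≤ θ) (hθ1 : θ ≤ 1) (m : ℕ) (x y : ℕ+ →₀ ℝ) :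
    tnormAux θ S m (x + y) ≤ tnormAux θ S m x + tnormAux θ S m y := by
  induction m generalizing x y with
  | zero =>
    exact ciSup_le fun i => (abs_add_le _ _).trans
      (add_le_add (abs_apply_le_tnormAux (θ := θ) (S := S) 0 x i)
        (abs_apply_le_tnormAux (θ := θ) (S := S) 0 y i))
  | succ m ih =>
    obtain ⟨hx, hxsum⟩ := (tnormAux_succ_le_iff (S := S) (m := m) (x := x) hθ1).1 le_rfl
    obtain ⟨hy, hysum⟩ := (tnormAux_succ_le_iff (S := S) (m := m) (x := y) hθ1).1 le_rfl
    refine (tnormAux_succ_le_iff hθ1).2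
      ⟨(ih x y).trans (add_le_add hx hy), fun E hE => ?_⟩
    calc θ * ∑ i, tnormAux θ S m (tsProj (E i) (x + y))
        ≤ θ * ∑ i, (tnormAux θ S m (tsProj (E i) x) + tnormAux θ S m (tsProj (E i) y)) := by
          gcongr with i
          exact tsProj_add (E i) x y ▸ ih _ _
      _ = θ * ∑ i, tnormAux θ S m (tsProj (E i) x)
          + θ * ∑ i, tnormAux θ S m (tsProj (E i) y) := by rw [Finset.sum_add_distrib, mul_add]
      _ ≤ _ := add_le_add (hxsum E hE) (hysum E hE)

lemma bddAbove_range_tnormAux (hθ1 : θ ≤ 1) (x : ℕ+ →₀ ℝ) :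
    BddAbove (Set.range fun m => tnormAux θ S m x) :=
  ⟨ellOneNorm x, Set.forall_mem_range.2 fun m => tnormAux_le_ellOneNorm hθ1 m x⟩

lemma tnormAux_le_tnorm (hθ1 : θ ≤ 1) (m : ℕ) (x : ℕ+ →₀ ℝ) :
    tnormAux θ S m x ≤ tnorm θ S x :=
  le_ciSup (bddAbove_range_tnormAux hθ1 x) m

lemma abs_apply_le_tnorm (hθ1 : θ ≤ 1) (x : ℕ+ →₀ ℝ) (i : ℕ+) :
    |x i| ≤ tnorm θ S x :=
  (abs_apply_le_tnormAux 0 x i).trans (tnormAux_le_tnorm hθ1 0 x)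

lemma tnorm_le_ellOneNorm (hθ1 : θ ≤ 1) (x : ℕ+ →₀ ℝ) :
    tnorm θ S x ≤ ellOneNorm x :=
  ciSup_le fun m => tnormAux_le_ellOneNorm hθ1 m x

lemma tnorm_mono (hθ0 : 0 ≤ θ) (hθ1 : θ ≤ 1) (h : ∀ i, |x i| ≤ |y i|) :
    tnorm θ S x ≤ tnorm θ S y :=
  ciSup_le fun m => (tnormAux_mono hθ0 hθ1 m h).trans (tnormAux_le_tnorm hθ1 m y)

lemma tnorm_congr_abs (hθ0 : 0 ≤ θ) (hθ1 : θ ≤ 1) (h : ∀ i, |x i| = |y i|) :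
    tnorm θ S x = tnorm θ S y :=
  le_antisymm (tnorm_mono hθ0 hθ1 fun i => (h i).le) (tnorm_mono hθ0 hθ1 fun i => (h i).ge)

lemma tnorm_add_le (hθ0 : 0 ≤ θ) (hθ1 : θ ≤ 1) (x y : ℕ+ →₀ ℝ) :
    tnorm θ S (x + y) ≤ tnorm θ S x + tnorm θ S y :=
  ciSup_le fun m => (tnormAux_add_le hθ0 hθ1 m x y).trans
    (add_le_add (tnormAux_le_tnorm hθ1 m x) (tnormAux_le_tnorm hθ1 m y))

lemma mul_sum_tnorm_tsProj_le (hθ1 : θ ≤ 1) (hE : TsAdmissible S E)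
    (x : ℕ+ →₀ ℝ) : θ * ∑ i, tnorm θ S (tsProj (E i) x) ≤ tnorm θ S x := by
  have hlim : Tendsto (fun m => θ * ∑ i, tnormAux θ S m (tsProj (E i) x)) atTop
      (𝓝 (θ * ∑ i, tnorm θ S (tsProj (E i) x))) :=
    .const_mul _ <| tendsto_finsetSum _ fun i _ =>
      tendsto_atTop_ciSup (tnormAux_monotone _) (bddAbove_range_tnormAux hθ1 _)
  exact le_of_tendsto' hlim fun m =>
    ((tnormAux_succ_le_iff hθ1).1 le_rfl).2 E hE |>.trans (tnormAux_le_tnorm hθ1 (m + 1) x)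

lemma tnorm_le_of_step (hθ1 : θ ≤ 1) (hC : ∀ i, |x i| ≤ C)
    (hstep : ∀ m, tnormAux θ S m x ≤ C → ∀ {d : ℕ} (E : Fin d → Finset ℕ+), TsAdmissible S E →
      θ * ∑ i, tnormAux θ S m (tsProj (E i) x) ≤ C) : tnorm θ S x ≤ C := by
  refine ciSup_le fun m => ?_
  induction m with
  | zero => exact ciSup_le hC
  | succ m ih => exact (tnormAux_succ_le_iff hθ1).2 ⟨ih, hstep m ih⟩

lemma tnorm_le (hθ0 : 0 ≤ θ) (hθ1 : θ ≤ 1) (hC : ∀ i, |x i| ≤ C)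
    (hsum : ∀ {d : ℕ} (E : Fin d → Finset ℕ+), TsAdmissible S E →
      θ * ∑ i, tnorm θ S (tsProj (E i) x) ≤ C) : tnorm θ S x ≤ C := by
  refine tnorm_le_of_step hθ1 hC fun m _ {d} E hE => le_trans ?_ (hsum E hE)
  gcongr
  exact tnormAux_le_tnorm hθ1 m _

lemma tnorm_add_le_of_add_mul_ellOneNorm_le (hθ0 : 0 ≤ θ) (hθ1 : θ ≤ 1)
    (hC : ∀ i, |x i + y i| ≤ C) (hxy : tnorm θ S x + θ * ellOneNorm y ≤ C) :
    tnorm θ S (x + y) ≤ C := by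
  refine tnorm_le hθ0 hθ1 hC fun E hE => ?_
  calc θ * ∑ i, tnorm θ S (tsProj (E i) (x + y))
      ≤ θ * ∑ i, (tnorm θ S (tsProj (E i) x) + ellOneNorm (tsProj (E i) y)) := by
        gcongr with i
        rw [tsProj_add]
        exact (tnorm_add_le hθ0 hθ1 _ _).trans (by gcongr; exact tnorm_le_ellOneNorm hθ1 _)
    _ = θ * ∑ i, tnorm θ S (tsProj (E i) x) + θ * ∑ i, ellOneNorm (tsProj (E i) y) := by
        rw [Finset.sum_add_distrib, mul_add]
    _ ≤ tnorm θ S x + θ * ellOneNorm y := by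
        gcongr
        exacts [mul_sum_tnorm_tsProj_le hθ1 hE x, hE.sum_ellOneNorm_tsProj_le y]
    _ ≤ C := hxy

lemma tnorm_single (hθ1 : θ ≤ 1) (a : ℕ+) (t : ℝ) :
    tnorm θ S (Finsupp.single a t) = |t| :=
  le_antisymm ((tnorm_le_ellOneNorm hθ1 _).trans_eq (ellOneNorm_single a t))
    (by simpa using abs_apply_le_tnorm (S := S) hθ1 (Finsupp.single a t) a)

lemma tnorm_le_of_mul_ellOneNorm_le (hθ0 : 0 ≤ θ) (hθ1 : θ ≤ 1) (hC : ∀ i, |x i| ≤ C)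
    (hx : θ * ellOneNorm x ≤ C) : tnorm θ S x ≤ C := by
  have hzero : tnorm θ S 0 = 0 := by simpa using tnorm_single (S := S) hθ1 1 0
  simpa using tnorm_add_le_of_add_mul_ellOneNorm_le (x := 0) hθ0 hθ1 (by simpa using hC)
    (by rwa [hzero, zero_add])

lemma mul_sum_abs_le_tnorm (hθ0 : 0 ≤ θ) (hθ1 : θ ≤ 1) (x : ℕ+ →₀ ℝ) {B : Finset ℕ+}
    (hB : B ∈ S) : θ * ∑ b ∈ B, |x b| ≤ tnorm θ S x := by
  set o := B.orderEmbOfFin rfl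
  calc θ * ∑ b ∈ B, |x b| = θ * ∑ i, |x (o i)| := by
        rw [← Finset.sum_image (f := fun b => |x b|) o.injective.injOn,
          Finset.image_orderEmbOfFin_univ]
    _ ≤ θ * ∑ i, tnorm θ S (tsProj {o i} x) := by
        gcongr with i
        simpa [tsProj_apply] using abs_apply_le_tnorm (S := S) hθ1 (tsProj {o i} x) (o i)
    _ ≤ tnorm θ S x := mul_sum_tnorm_tsProj_le hθ1 (.of_singletons hB) x

lemma tnorm_le_max_abs_tnorm_erase (hθ0 : 0 ≤ θ) (hθ1 : θ ≤ 1) {p : ℕ+} (hp : θ * p ≤ 1)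
    (x : ℕ+ →₀ ℝ) : tnorm θ (Schreier 1) x ≤ max |x p| (tnorm θ (Schreier 1) (x.erase p)) := by
  set C := max |x p| (tnorm θ (Schreier 1) (x.erase p))
  have hC : ∀ i, |x i| ≤ C := fun i => by
    rcases eq_or_ne i p with rfl | hi
    · exact le_max_left _ _
    · rw [← Finsupp.erase_ne hi]
      exact (abs_apply_le_tnorm hθ1 _ i).trans (le_max_right _ _)
  have hC0 : 0 ≤ C := (abs_nonneg _).trans (hC 1)
  refine tnorm_le_of_step hθ1 hC fun m hm {d} E hE => ?_
  by_cases hpE : ∃ i, p ∈ E i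
  · obtain ⟨i, hi⟩ := hpE
    calc θ * ∑ i, tnormAux θ (Schreier 1) m (tsProj (E i) x) ≤ θ * ∑ _i : Fin d, C := by
          gcongr
          exact (tnormAux_mono hθ0 hθ1 m (abs_tsProj_apply_le _ x)).trans hm
      _ = θ * d * C := by simp [mul_assoc]
      _ ≤ θ * p * C := by
          gcongr
          exact_mod_cast hE.card_le hi
      _ ≤ C := mul_le_of_le_one_left hC0 hp
  · push Not at hpE
    refine le_trans ?_ ((mul_sum_tnorm_tsProj_le hθ1 hE (x.erase p)).trans (le_max_right _ _))
    gcongr with i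
    rw [tsProj_erase_of_notMem (hpE i)]
    exact tnormAux_le_tnorm hθ1 m _

lemma ellOneNorm_tsProj_le_card {s : Finset ℕ+} (hs : x.support ⊆ s) (hx : ∀ i, |x i| ≤ 1)
    (F : Finset ℕ+) : ellOneNorm (tsProj F x) ≤ {a ∈ s | a ∈ F}.card :=
  ellOneNorm_le_card (Finset.filter_subset_filter _ hs)
    fun i => (abs_tsProj_apply_le F x i).trans (hx i)

lemma tnorm_tsProj_le_card_sub_one (hθ0 : 0 ≤ θ) (hθ : θ ≤ 1 / 2) {s : Finset ℕ+}
    (hs : x.support ⊆ s) (hx : ∀ i, |x i| ≤ 1) {F : Finset ℕ+} (hF : 2 ≤ {a ∈ s | a ∈ F}.card) :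
    tnorm θ S (tsProj F x) ≤ {a ∈ s | a ∈ F}.card - 1 := by
  have hF' : (2 : ℝ) ≤ {a ∈ s | a ∈ F}.card := mod_cast hF
  refine tnorm_le_of_mul_ellOneNorm_le hθ0 (by linarith)
    (fun i => ((abs_tsProj_apply_le F x i).trans (hx i)).trans (by linarith)) ?_
  calc θ * ellOneNorm (tsProj F x) ≤ 1 / 2 * {a ∈ s | a ∈ F}.card := by
        gcongr
        exacts [ellOneNorm_nonneg _, ellOneNorm_tsProj_le_card hs hx F]
    _ ≤ {a ∈ s | a ∈ F}.card - 1 := by linarith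

lemma sum_tnorm_tsProj_le_of_length_le (hθ0 : 0 ≤ θ) (hθ : θ ≤ 1 / 2) (hE : TsAdmissible S E)
    {s : Finset ℕ+} {k : ℕ} (hsk : s.card ≤ k + 1) (hs : x.support ⊆ s) (hx : ∀ i, |x i| ≤ 1)
    (hd : d ≤ k) : ∑ i, tnorm θ S (tsProj (E i) x) ≤ k := by
  have hcard (i) : tnorm θ S (tsProj (E i) x) ≤ {a ∈ s | a ∈ E i}.card :=
    (tnorm_le_ellOneNorm (by linarith) _).trans (ellOneNorm_tsProj_le_card hs hx (E i))
  by_cases htwo : ∃ j, 2 ≤ {a ∈ s | a ∈ E j}.card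
  · obtain ⟨j, hj⟩ := htwo
    calc ∑ i, tnorm θ S (tsProj (E i) x)
        ≤ ∑ i, (({a ∈ s | a ∈ E i}.card : ℝ) - if i = j then 1 else 0) := by
          gcongr with i
          split_ifs with hij
          · exact hij ▸ tnorm_tsProj_le_card_sub_one hθ0 hθ hs hx hj
          · simpa using hcard i
      _ = ∑ i, ({a ∈ s | a ∈ E i}.card : ℝ) - 1 := by simp
      _ ≤ (k + 1 : ℕ) - 1 := by
          gcongr
          exact (hE.sum_card_filter_mem_le s).trans (mod_cast hsk)
      _ = k := by simp
  · push Not at htwo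
    calc ∑ i, tnorm θ S (tsProj (E i) x) ≤ ∑ _i : Fin d, (1 : ℝ) :=
          Finset.sum_le_sum fun i _ => (hcard i).trans (mod_cast Nat.le_of_lt_succ (htwo i))
      _ ≤ k := by simpa using hd

lemma tnorm_le_mul_of_support_subset_insert (hθ0 : 0 ≤ θ) (hθ : θ ≤ 1 / 2) {s : Finset ℕ+}
    {p : ℕ+} {k : ℕ} (hsk : s.card ≤ k) (hpk : (p : ℕ) ≤ k) (hk : 1 ≤ θ * k)
    (hs : x.support ⊆ insert p s) (hx : ∀ i, |x i| ≤ 1) : tnorm θ (Schreier 1) x ≤ θ * k := by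
  refine tnorm_le hθ0 (by linarith) (fun i => (hx i).trans hk) fun {d} E hE => ?_
  gcongr
  by_cases hpE : ∃ i, p ∈ E i
  · obtain ⟨i, hi⟩ := hpE
    exact sum_tnorm_tsProj_le_of_length_le hθ0 hθ hE
      ((Finset.card_insert_le p s).trans (by lia)) hs hx ((hE.card_le hi).trans hpk)
  · push Not at hpE
    calc ∑ i, tnorm θ (Schreier 1) (tsProj (E i) x)
        ≤ ∑ i, ellOneNorm (tsProj (E i) (x.erase p)) := by
          gcongr with i
          rw [tsProj_erase_of_notMem (hpE i)]
          exact tnorm_le_ellOneNorm (by linarith) _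
      _ ≤ ellOneNorm (x.erase p) := hE.sum_ellOneNorm_tsProj_le _
      _ ≤ s.card := by
          refine ellOneNorm_le_card ?_ fun i => ?_
          · rw [Finsupp.support_erase]
            exact Finset.subset_insert_iff.1 hs
          · by_cases hi : i = p <;> simp [hi, hx]
      _ ≤ k := mod_cast hsk

end TsirelsonNorm

section Basis

variable {X : Type*} [NormedAddCommGroup X] [NormedSpace ℝ X] {θ : ℝ} {S : Set (Finset ℕ+)}

lemma coord_apply_basis {ι : Type*} [DecidableEq ι] (b : UnconditionalSchauderBasis ι ℝ X)
    (i j : ι) : b.coord i (b j) = if i = j then 1 else 0 := by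
  rw [b.ortho]
  by_cases h : i = j <;> simp [h]

lemma coord_linearCombination {ι : Type*} (b : UnconditionalSchauderBasis ι ℝ X) (i : ι)
    (a : ι →₀ ℝ) : b.coord i (Finsupp.linearCombination ℝ b a) = a i := by
  classical
  simp +contextual [Finsupp.linearCombination_apply, Finsupp.sum, coord_apply_basis, eq_comm]

lemma coord_sum_smul {ι : Type*} [DecidableEq ι] (b : UnconditionalSchauderBasis ι ℝ X) (i : ι)
    (B : Finset ι) (t : ι → ℝ) : b.coord i (∑ j ∈ B, t j • b j) = if i ∈ B then t i else 0 := by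
  simp [coord_apply_basis]

lemma eq_of_coord_eq {ι : Type*} {b : UnconditionalSchauderBasis ι ℝ X} {x y : X}
    (h : ∀ i, b.coord i x = b.coord i y) : x = y := by
  have hx := b.expansion x
  simp only [h] at hx
  exact hx.unique (b.expansion y)

lemma denseRange_linearCombination {ι : Type*} (b : UnconditionalSchauderBasis ι ℝ X) :
    DenseRange (Finsupp.linearCombination ℝ b) := fun x => by
  refine mem_closure_of_tendsto (b.tendsto_proj x) (Eventually.of_forall fun A => ?_)
  exact ⟨∑ i ∈ A, Finsupp.single i (b.coord i x), by simp⟩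

lemma linearCombination_indicator {ι : Type*} (e : ι → X) (B : Finset ι) (t : ι → ℝ) :
    Finsupp.linearCombination ℝ e (Finsupp.indicator B fun i _ => t i) = ∑ i ∈ B, t i • e i :=
  Finsupp.sum_indicator_index (h := fun i c => c • e i) t fun _ _ => zero_smul ℝ _

lemma abs_le_norm_of_hasSum (hθ1 : θ ≤ 1) {e : ℕ+ → X}
    (hnorm : ∀ a, ‖Finsupp.linearCombination ℝ e a‖ = tnorm θ S a) {a : ℕ+ → ℝ} {x : X}
    (hx : HasSum (fun i => a i • e i) x) (i : ℕ+) : |a i| ≤ ‖x‖ := by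
  refine ge_of_tendsto hx.norm ?_
  filter_upwards [eventually_ge_atTop {i}] with A hA
  rw [← linearCombination_indicator, hnorm]
  simpa [Finset.singleton_subset_iff.1 hA] using
    abs_apply_le_tnorm (S := S) hθ1 (Finsupp.indicator A fun j _ => a j) i

/-- The basis `b` realizes `X` as the Tsirelson space `T[θ, S]`, up to completeness, with
`0 < θ ≤ 1 / 2`: finitely supported combinations of the basis vectors have their Tsirelson norm. -/
structure IsTsirelsonBasis (θ : ℝ) (S : Set (Finset ℕ+))
    (b : UnconditionalSchauderBasis ℕ+ ℝ X) : Prop where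
  pos : 0 < θ
  le_half : θ ≤ 1 / 2
  norm_linearCombination : ∀ a, ‖Finsupp.linearCombination ℝ b a‖ = tnorm θ S a

lemma exists_isTsirelsonBasis (hθ0 : 0 < θ) (hθ : θ ≤ 1 / 2) {e : ℕ+ → X}
    (hnorm : ∀ a, ‖Finsupp.linearCombination ℝ e a‖ = tnorm θ S a)
    (hexp : ∀ x, ∃! a : ℕ+ → ℝ, HasSum (fun i => a i • e i) x) :
    ∃ b : UnconditionalSchauderBasis ℕ+ ℝ X, b.basis = e ∧ IsTsirelsonBasis θ S b := by
  choose c hc huniq using hexp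
  let coordₗ (i : ℕ+) : X →ₗ[ℝ] ℝ :=
    { toFun := fun x => c x i
      map_add' := fun x y => congrFun (huniq (x + y) (c x + c y)
        (by simpa [add_smul] using (hc x).add (hc y))).symm i
      map_smul' := fun t x => congrFun (huniq (t • x) (t • c x)
        (by simpa [mul_smul] using (hc x).const_smul t)).symm i }
  have hbound (i x) : ‖coordₗ i x‖ ≤ 1 * ‖x‖ := by
    rw [one_mul]
    exact abs_le_norm_of_hasSum (by linarith) hnorm (hc x) i
  refine ⟨⟨e, fun i => (coordₗ i).mkContinuous 1 (hbound i), fun i j => ?_, hc⟩, rfl,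
    hθ0, hθ, hnorm⟩
  have hsingle : HasSum (fun i => (Pi.single j 1 : ℕ+ → ℝ) i • e i) (e j) := by
    simpa using hasSum_single (f := fun i => (Pi.single j 1 : ℕ+ → ℝ) i • e i) j
      fun i hi => by simp [Pi.single_eq_of_ne hi]
  exact (congrFun (huniq (e j) _ hsingle).symm i).trans (by congr!)

end Basis

namespace IsTsirelsonBasis

variable {X : Type*} [NormedAddCommGroup X] [NormedSpace ℝ X] {θ C : ℝ} {S : Set (Finset ℕ+)}
  {e : UnconditionalSchauderBasis ℕ+ ℝ X}

lemma le_one (hT : IsTsirelsonBasis θ S e) : θ ≤ 1 := hT.le_half.trans (by norm_num)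

lemma abs_coord_le_norm (hT : IsTsirelsonBasis θ S e) (i : ℕ+) (x : X) : |e.coord i x| ≤ ‖x‖ :=
  abs_le_norm_of_hasSum hT.le_one hT.norm_linearCombination (e.expansion x) i

lemma norm_basis (hT : IsTsirelsonBasis θ S e) (i : ℕ+) : ‖e i‖ = 1 := by
  simpa [tnorm_single hT.le_one] using hT.norm_linearCombination (Finsupp.single i 1)

lemma norm_add_smul_le (hT : IsTsirelsonBasis θ S e) (i : ℕ+) (t : ℝ) (x : X) :
    ‖x + t • e i‖ ≤ max |e.coord i x + t| (‖x‖ + θ * |t|) := by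
  refine (denseRange_linearCombination e).induction_on x
    (isClosed_le (by fun_prop) (by fun_prop)) fun a => ?_
  rw [coord_linearCombination, ← Finsupp.linearCombination_single, ← map_add,
    hT.norm_linearCombination, hT.norm_linearCombination]
  refine tnorm_add_le_of_add_mul_ellOneNorm_le hT.pos.le hT.le_one (fun j => ?_)
    (by simp)
  rcases eq_or_ne j i with rfl | hj
  · simp
  · rw [Finsupp.single_eq_of_ne hj, add_zero]
    exact (abs_apply_le_tnorm hT.le_one a j).trans
      ((le_add_of_nonneg_right (mul_nonneg hT.pos.le (abs_nonneg t))).trans (le_max_right _ _))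

lemma norm_sub_two_coord_smul (hT : IsTsirelsonBasis θ S e) (i : ℕ+) (x : X) :
    ‖x - (2 * e.coord i x) • e i‖ = ‖x‖ := by
  refine (denseRange_linearCombination e).induction_on x
    (isClosed_eq (by fun_prop) (by fun_prop)) fun a => ?_
  rw [coord_linearCombination, ← Finsupp.linearCombination_single, ← map_sub,
    hT.norm_linearCombination, hT.norm_linearCombination]
  refine tnorm_congr_abs hT.pos.le hT.le_one fun j => ?_
  rcases eq_or_ne j i with rfl | hj
  · rw [Finsupp.sub_apply, Finsupp.single_eq_same, ← abs_neg]
    ring_nf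
  · simp [Finsupp.single_eq_of_ne hj]

lemma mul_sum_abs_coord_le_norm (hT : IsTsirelsonBasis θ S e) {B : Finset ℕ+} (hB : B ∈ S)
    (x : X) : θ * ∑ i ∈ B, |e.coord i x| ≤ ‖x‖ := by
  refine (denseRange_linearCombination e).induction_on x
    (isClosed_le (by fun_prop) (by fun_prop)) fun a => ?_
  simp only [coord_linearCombination, hT.norm_linearCombination]
  exact mul_sum_abs_le_tnorm hT.pos.le hT.le_one a hB

lemma norm_sum_smul (hT : IsTsirelsonBasis θ S e) (B : Finset ℕ+) (t : ℕ+ → ℝ) :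
    ‖∑ i ∈ B, t i • e i‖ = tnorm θ S (Finsupp.indicator B fun i _ => t i) := by
  rw [← linearCombination_indicator, hT.norm_linearCombination]

lemma norm_sum_smul_le (hT : IsTsirelsonBasis θ S e) {B : Finset ℕ+} (hB : θ * B.card ≤ 1)
    {t : ℕ+ → ℝ} (hC : 0 ≤ C) (ht : ∀ i ∈ B, |t i| ≤ C) : ‖∑ i ∈ B, t i • e i‖ ≤ C := by
  have hC' (i) : |Finsupp.indicator B (fun j _ => t j) i| ≤ C := by
    rw [Finsupp.indicator_apply]
    split_ifs with hi
    exacts [ht i hi, abs_zero.trans_le hC]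
  rw [hT.norm_sum_smul]
  refine tnorm_le_of_mul_ellOneNorm_le hT.pos.le hT.le_one hC' ?_
  calc θ * ellOneNorm (Finsupp.indicator B fun i _ => t i) ≤ θ * (B.card * C) := by
        gcongr
        · exact hT.pos.le
        rw [ellOneNorm, Finsupp.sum_indicator_index _ fun _ _ => abs_zero, ← nsmul_eq_mul]
        exact Finset.sum_le_card_nsmul _ _ _ ht
    _ = θ * B.card * C := (mul_assoc _ _ _).symm
    _ ≤ C := mul_le_of_le_one_left hC hB

lemma norm_smul_add_smul_le (hT : IsTsirelsonBasis θ S e) {i j : ℕ+} (hij : i ≠ j) {s t : ℝ}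
    (hs : |s| ≤ C) (ht : |t| ≤ C) : ‖s • e i + t • e j‖ ≤ C := by
  have hcard : θ * ({i, j} : Finset ℕ+).card ≤ 1 := by
    rw [Finset.card_pair hij]
    push_cast
    linarith [hT.le_half]
  have hle := hT.norm_sum_smul_le hcard (t := fun k => if k = i then s else t)
    ((abs_nonneg s).trans hs) fun k _ => by split_ifs <;> assumption
  simpa [Finset.sum_pair hij, hij.symm] using hle

variable {p : ℕ+}

lemma norm_add_smul_le_of_mul_le_one (hT : IsTsirelsonBasis θ (Schreier 1) e) (hp : θ * p ≤ 1)
    (t : ℝ) (x : X) : ‖x + t • e p‖ ≤ max |e.coord p x + t| ‖x‖ := by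
  refine (denseRange_linearCombination e).induction_on x
    (isClosed_le (by fun_prop) (by fun_prop)) fun a => ?_
  rw [coord_linearCombination, ← Finsupp.linearCombination_single, ← map_add,
    hT.norm_linearCombination, hT.norm_linearCombination]
  refine (tnorm_le_max_abs_tnorm_erase hT.pos.le hT.le_one hp _).trans
    (max_le_max (by simp) (tnorm_mono hT.pos.le hT.le_one fun j => ?_))
  by_cases hj : j = p <;> simp [hj]

lemma norm_sum_insert_smul_le (hT : IsTsirelsonBasis θ (Schreier 1) e) {B : Finset ℕ+} {k : ℕ}
    (hBk : B.card ≤ k) (hpk : (p : ℕ) ≤ k) (hk : 1 ≤ θ * k) {t : ℕ+ → ℝ} (ht : ∀ i, |t i| ≤ 1) :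
    ‖∑ i ∈ insert p B, t i • e i‖ ≤ θ * k := by
  rw [hT.norm_sum_smul]
  refine tnorm_le_mul_of_support_subset_insert hT.pos.le hT.le_half hBk hpk hk
    (Finsupp.support_indicator_subset _ _) fun i => ?_
  rw [Finsupp.indicator_apply]
  split_ifs
  exacts [ht i, by simp]

end IsTsirelsonBasis

section FlatPoint

open NormedSpace

variable {X : Type*} [NormedAddCommGroup X] [NormedSpace ℝ X] {f : StrongDual ℝ X}
  {x v g h : X} {r C : ℝ}

lemma norm_smul_add_smul_of_norm_add_eq_two (hg : ‖g‖ = 1) (hh : ‖h‖ = 1) (hgh : ‖g + h‖ = 2)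
    {s t : ℝ} (hs : 0 ≤ s) (ht : 0 ≤ t) : ‖s • g + t • h‖ = s + t := by
  wlog hst : s ≤ t generalizing g h s t
  · rw [add_comm, this hh hg (by rwa [add_comm]) ht hs (le_of_not_ge hst), add_comm]
  refine le_antisymm (norm_add_le_of_le ?_ ?_) ?_
  · simp [norm_smul, hg, abs_of_nonneg hs]
  · simp [norm_smul, hh, abs_of_nonneg ht]
  · have hcomb : s • g + t • h = t • (g + h) - (t - s) • g := by module
    have htri := norm_sub_norm_le (t • (g + h)) ((t - s) • g)
    rw [← hcomb, norm_smul_of_nonneg ht, norm_smul_of_nonneg (sub_nonneg.2 hst), hgh, hg] at htri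
    linarith

lemma norm_normalize_sub_self_le (w : X) : ‖normalize w - w‖ ≤ |1 - ‖w‖| := by
  rcases eq_or_ne w 0 with rfl | hw
  · simp
  · have hsub : normalize w - w = (1 - ‖w‖) • normalize w := by
      rw [sub_smul, one_smul, norm_smul_normalize]
    rw [hsub, norm_smul, norm_normalize_eq_one_iff.2 hw, mul_one, Real.norm_eq_abs]

/-- `f` is a norm-one functional attaining its norm at the unit vector `x`. -/
structure IsSupportFunctional (f : StrongDual ℝ X) (x : X) : Prop where
  norm_eq_one : ‖x‖ = 1
  apply_self : f x = 1
  apply_le_norm : ∀ y, f y ≤ ‖y‖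

lemma exists_isSupportFunctional (hx : ‖x‖ = 1) :
    ∃ f : StrongDual ℝ X, IsSupportFunctional f x := by
  obtain ⟨f, hf, hfx⟩ := exists_dual_vector ℝ x (norm_ne_zero_iff.1 (by simp [hx]))
  refine ⟨f, hx, by simpa [hx] using hfx, fun y => (le_abs_self _).trans ?_⟩
  simpa [hf] using f.le_opNorm y

lemma IsSupportFunctional.abs_apply_le (hf : IsSupportFunctional f x)
    (hv : ∀ᶠ t : ℝ in 𝓝 0, ‖x + t • v‖ ≤ 1 + C * |t|) : |f v| ≤ C := by
  obtain ⟨ρ, hρ, hball⟩ := Metric.eventually_nhds_iff.1 hv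
  have hle (t : ℝ) (ht : |t| = ρ / 2) : t * f v ≤ C * (ρ / 2) := by
    have hfle := (hf.apply_le_norm (x + t • v)).trans (hball (y := t) (by simp [ht, hρ]))
    simp only [map_add, map_smul, hf.apply_self, smul_eq_mul, ht] at hfle
    linarith
  have hpos := hle (ρ / 2) (abs_of_pos (half_pos hρ))
  have hneg := hle (-(ρ / 2)) (by rw [abs_neg, abs_of_pos (half_pos hρ)])
  exact abs_le.2 ⟨by nlinarith, by nlinarith⟩

/-- The unit sphere is flat near `x`: every unit vector at distance less than `r` from `x` lies
in the face of the unit ball cut out by the support functional `f`. -/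
structure IsFlat (f : StrongDual ℝ X) (x : X) (r : ℝ) : Prop extends IsSupportFunctional f x where
  apply_eq_one : ∀ g, ‖g‖ = 1 → ‖g - x‖ < r → f g = 1

lemma IsSupportFunctional.isFlat (hf : IsSupportFunctional f x)
    (hadd : ∀ g h, ‖g‖ = 1 → ‖h‖ = 1 → ‖g - x‖ < r → ‖h - x‖ < r → ‖g + h‖ = 2) :
    IsFlat f x r := by
  refine ⟨hf, fun g hg hgx => ?_⟩
  -- The norm is additive on the cone spanned by `g` and `normalize w`, which contains `x`.
  set w := x - (1 / 4 : ℝ) • (g - x) with hw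
  have hx := hf.norm_eq_one
  have hwx : ‖w - x‖ = 1 / 4 * ‖g - x‖ := by
    rw [hw, sub_sub_cancel_left, norm_neg, norm_smul_of_nonneg (by norm_num)]
  have hgx_le : ‖g - x‖ ≤ 2 := (norm_sub_le g x).trans (by rw [hg, hx]; norm_num)
  have hnorm : |‖x‖ - ‖w‖| ≤ ‖w - x‖ := norm_sub_rev w x ▸ abs_norm_sub_norm_le x w
  have hw0 : w ≠ 0 := by
    intro h0
    rw [hwx, h0, hx, norm_zero, sub_zero, abs_one] at hnorm
    linarith
  have hclose : ‖normalize w - x‖ < r := by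
    have htri := norm_sub_le_norm_sub_add_norm_sub (normalize w) w x
    have := norm_normalize_sub_self_le w
    rw [hx] at hnorm
    linarith [norm_nonneg (g - x)]
  have hnw := norm_normalize_eq_one_iff.2 hw0
  have hw1 : ‖w‖ = 1 := by
    have hseg := norm_smul_add_smul_of_norm_add_eq_two hg hnw (hadd g _ hg hnw hgx hclose)
      (by norm_num : (0 : ℝ) ≤ 1 / 4) (norm_nonneg w)
    have hcomb : (1 / 4 : ℝ) • g + w = (5 / 4 : ℝ) • x := by rw [hw]; module
    rw [norm_smul_normalize, hcomb, norm_smul_of_nonneg (by norm_num), hx] at hseg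
    linarith
  have hfw := hf.apply_le_norm w
  have hfg := hf.apply_le_norm g
  simp only [hw, map_sub, map_smul, hf.apply_self, smul_eq_mul] at hfw
  rw [← hw] at hfw
  linarith

lemma IsFlat.norm_add_eq_one (hf : IsFlat f x r) (hfv : f v = 0) (hv : ‖v‖ < r) : ‖x + v‖ = 1 := by
  have happly (t : ℝ) : f (x + t • v) = 1 := by simp [hf.apply_self, hfv]
  refine le_antisymm (not_lt.1 fun hgt => ?_) ?_
  swap
  · simpa [happly] using (happly 1).ge.trans (hf.apply_le_norm _)
  obtain ⟨δ, hδ0, hδ⟩ : ∃ δ > 0, δ < min (r - ‖v‖) (‖x + v‖ - 1) :=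
    exists_between (lt_min (sub_pos.2 hv) (sub_pos.2 hgt))
  obtain ⟨hδr, hδx⟩ := lt_min_iff.1 hδ
  obtain ⟨t, ⟨ht0, ht1⟩, ht⟩ : 1 + δ ∈ (fun t : ℝ => ‖x + t • v‖) '' Set.Icc 0 1 :=
    intermediate_value_Icc zero_le_one (by fun_prop)
      ⟨by simp [hf.norm_eq_one, hδ0.le], by simp; linarith⟩
  dsimp only at ht
  have hne : x + t • v ≠ 0 := norm_ne_zero_iff.1 (by linarith)
  have hclose : ‖normalize (x + t • v) - x‖ < r := calc
    ‖normalize (x + t • v) - x‖ ≤ ‖normalize (x + t • v) - (x + t • v)‖ + ‖(x + t • v) - x‖ :=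
        norm_sub_le_norm_sub_add_norm_sub _ _ _
    _ ≤ δ + ‖v‖ := by
        gcongr
        · simpa [ht, abs_of_pos hδ0] using norm_normalize_sub_self_le (x + t • v)
        · rw [add_sub_cancel_left, norm_smul_of_nonneg ht0]
          exact mul_le_of_le_one_left (norm_nonneg v) ht1
    _ < r := by linarith
  have hone := hf.apply_eq_one _ (norm_normalize_eq_one_iff.2 hne) hclose
  have hone' := congrArg f (norm_smul_normalize (x + t • v))
  rw [map_smul, hone, happly, ht, smul_eq_mul, mul_one] at hone'
  linarith

end FlatPoint

section Cofinite

lemma exists_card_eq_of_eventually_cofinite {α : Type*} [Infinite α] {P : α → Prop}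
    (hP : ∀ᶠ a in cofinite, P a) (m : ℕ) : ∃ B : Finset α, B.card = m ∧ ∀ a ∈ B, P a := by
  have hinf : {a | P a}.Infinite := frequently_cofinite_iff_infinite.1 hP.frequently
  obtain ⟨B, hBP, hB⟩ := hinf.exists_subset_card_eq m
  exact ⟨B, hB, fun a ha => hBP ha⟩

lemma eventually_cofinite_lt_pnat (m : ℕ) : ∀ᶠ i : ℕ+ in cofinite, m < (i : ℕ) :=
  PNat.coe_injective.tendsto_cofinite.eventually
    (Nat.cofinite_eq_atTop ▸ eventually_gt_atTop m)

end Cofinite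

section FlatPointOfBasis

variable {X : Type*} [NormedAddCommGroup X] [NormedSpace ℝ X] {θ r : ℝ} {S : Set (Finset ℕ+)}
  {e : UnconditionalSchauderBasis ℕ+ ℝ X} {f : StrongDual ℝ X} {x : X} {a : ℕ+}

lemma IsSupportFunctional.hasSum (hf : IsSupportFunctional f x) :
    HasSum (fun i => e.coord i x * f (e i)) 1 := by
  simpa [hf.apply_self] using (e.expansion x).mapL f

lemma IsSupportFunctional.exists_apply_basis_ne_zero (hf : IsSupportFunctional f x) :
    ∃ i, f (e i) ≠ 0 := by
  by_contra! h
  have hsum := hf.hasSum (e := e)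
  simp only [h, mul_zero] at hsum
  exact zero_ne_one (hasSum_zero.unique hsum)

lemma eventually_abs_add_le_one {c : ℝ} (hc : |c| < 1) : ∀ᶠ t in 𝓝 (0 : ℝ), |c + t| ≤ 1 := by
  have hcont : ContinuousAt (fun t : ℝ => |c + t|) 0 := by fun_prop
  exact (hcont.eventually_lt continuousAt_const (by simpa using hc)).mono fun _ => le_of_lt

namespace IsTsirelsonBasis

lemma coord_mul_apply_basis_nonneg (hT : IsTsirelsonBasis θ S e) (hf : IsSupportFunctional f x)
    (i : ℕ+) : 0 ≤ e.coord i x * f (e i) := by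
  have hflip := hf.apply_le_norm (x - (2 * e.coord i x) • e i)
  rw [hT.norm_sub_two_coord_smul, hf.norm_eq_one, map_sub, map_smul, hf.apply_self,
    smul_eq_mul] at hflip
  linarith

lemma abs_apply_basis_le (hT : IsTsirelsonBasis θ S e) (hf : IsSupportFunctional f x)
    (ha : |e.coord a x| < 1) : |f (e a)| ≤ θ := by
  refine hf.abs_apply_le ((eventually_abs_add_le_one ha).mono fun t ht => ?_)
  have hle := hT.norm_add_smul_le a t x
  rw [hf.norm_eq_one] at hle
  exact hle.trans (max_le (ht.trans (le_add_of_nonneg_right (by have := hT.pos; positivity)))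
    le_rfl)

lemma apply_basis_eq_zero (hT : IsTsirelsonBasis θ (Schreier 1) e)
    (hf : IsSupportFunctional f x) (ha : |e.coord a x| < 1) (hθa : θ * a ≤ 1) : f (e a) = 0 := by
  refine abs_nonpos_iff.1 (hf.abs_apply_le ((eventually_abs_add_le_one ha).mono fun t ht => ?_))
  rw [zero_mul, add_zero]
  exact (hT.norm_add_smul_le_of_mul_le_one hθa t x).trans (max_le ht hf.norm_eq_one.le)

lemma norm_basis_sub_smul_le (hT : IsTsirelsonBasis θ S e) (hf : IsSupportFunctional f x)
    (ha : |e.coord a x| < 1) : ‖e a - f (e a) • x‖ ≤ 1 - f (e a) * e.coord a x := by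
  have hF := hT.abs_apply_basis_le hf ha
  have hAF := hT.coord_mul_apply_basis_nonneg hf a
  have hθ := hT.le_half
  set F := f (e a)
  set A := e.coord a x
  have hFA : |F| * |A| = F * A := by rw [← abs_mul, abs_of_nonneg (by linarith)]
  have hFA_le : F * A ≤ 1 / 2 := by nlinarith [abs_nonneg F]
  have hcoord : e.coord a (e a - F • x) = 1 - F * A := by simp [coord_apply_basis, A]
  have hflip : e a - F • x - (2 * (1 - F * A)) • e a
      = -(F • x + (1 - 2 * (F * A)) • e a) := by module
  have hbound := hT.norm_add_smul_le a (1 - 2 * (F * A)) (F • x)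
  rw [← hT.norm_sub_two_coord_smul a, hcoord, hflip, norm_neg]
  refine hbound.trans (max_le ?_ ?_)
  · rw [map_smul, smul_eq_mul, abs_of_nonneg (by linarith)]
    linarith
  · rw [norm_smul, hf.norm_eq_one, mul_one, Real.norm_eq_abs,
      abs_of_nonneg (by linarith : (0 : ℝ) ≤ 1 - 2 * (F * A)), ← hFA]
    have hθA : 0 ≤ (1 - |A|) * (1 - 2 * θ) := mul_nonneg (by linarith) (by linarith)
    nlinarith [mul_nonneg hT.pos.le (abs_nonneg A), mul_nonneg (abs_nonneg F) hθA, hT.pos,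
      abs_nonneg F, abs_nonneg A, mul_nonneg (abs_nonneg F) (abs_nonneg A)]

lemma exists_isSupportFunctional_coord_eq (hT : IsTsirelsonBasis θ S e) (hf : IsFlat f x r)
    (ha : |e.coord a x| < 1) {t : ℝ} (ht : |t - e.coord a x| < r) :
    ∃ y, IsSupportFunctional f y ∧ e.coord a y = t := by
  have hw := hT.norm_basis_sub_smul_le hf.toIsSupportFunctional ha
  have hF := hT.abs_apply_basis_le hf.toIsSupportFunctional ha
  have hθ := hT.le_half
  set F := f (e a)
  set A := e.coord a x
  have hD : 0 < 1 - F * A := by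
    have := abs_le.1 (abs_mul F A).le
    nlinarith [abs_nonneg F, abs_nonneg A]
  set w := e a - F • x
  have hfw : f w = 0 := by simp [w, F, hf.apply_self]
  have hcw : e.coord a w = 1 - F * A := by simp [w, A, coord_apply_basis]
  refine ⟨x + ((t - A) / (1 - F * A)) • w, ⟨hf.norm_add_eq_one (by simp [hfw]) ?_,
    by simp [hfw, hf.apply_self], hf.apply_le_norm⟩, ?_⟩
  · calc ‖((t - A) / (1 - F * A)) • w‖ = |t - A| / (1 - F * A) * ‖w‖ := by
          rw [norm_smul, Real.norm_eq_abs, abs_div, abs_of_pos hD]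
      _ ≤ |t - A| / (1 - F * A) * (1 - F * A) := by gcongr
      _ < r := by rwa [div_mul_cancel₀ _ hD.ne']
  · rw [map_add, map_smul, hcw, smul_eq_mul, div_mul_cancel₀ _ hD.ne']
    exact add_sub_cancel _ _

lemma abs_coord_le_of_isFlat (hT : IsTsirelsonBasis θ S e) (hf : IsFlat f x r)
    (ha : |e.coord a x| < 1) : |e.coord a x| ≤ 1 - r := by
  have hball (t : ℝ) (ht : |t - e.coord a x| < r) : |t| ≤ 1 := by
    obtain ⟨y, hy, rfl⟩ := hT.exists_isSupportFunctional_coord_eq hf ha ht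
    exact (hT.abs_coord_le_norm a y).trans hy.norm_eq_one.le
  by_contra! hlt
  obtain ⟨ρ, hρ, hρr⟩ := exists_between (sub_lt_comm.1 hlt)
  have hρ0 : |ρ| = ρ := abs_of_pos (by linarith)
  rcases abs_cases (e.coord a x) with ⟨habs, -⟩ | ⟨habs, -⟩
  · have := le_of_abs_le (hball (e.coord a x + ρ) (by simpa [hρ0]))
    linarith
  · have := neg_le_of_abs_le (hball (e.coord a x - ρ) (by simpa [hρ0]))
    linarith

lemma le_abs_coord_of_isFlat (hT : IsTsirelsonBasis θ S e) (hf : IsFlat f x r)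
    (ha : |e.coord a x| < 1) (hfa : f (e a) ≠ 0) : r ≤ |e.coord a x| := by
  by_contra! hlt
  have hnear : ∀ᶠ δ in 𝓝 (0 : ℝ), |-δ * f (e a) - e.coord a x| < r := by
    refine ContinuousAt.eventually_lt (by fun_prop) continuousAt_const ?_
    simpa using hlt
  obtain ⟨δ, hδ, hδ0⟩ :=
    ((hnear.filter_mono nhdsWithin_le_nhds).and (self_mem_nhdsWithin (s := Set.Ioi 0))).exists
  obtain ⟨y, hy, hyt⟩ := hT.exists_isSupportFunctional_coord_eq hf ha hδ
  have hsign := hT.coord_mul_apply_basis_nonneg hy a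
  rw [hyt] at hsign
  nlinarith [mul_pos (Set.mem_Ioi.1 hδ0) (mul_self_pos.2 hfa)]

end IsTsirelsonBasis

end FlatPointOfBasis

section HalfFlatPoint

variable {X : Type*} [NormedAddCommGroup X] [NormedSpace ℝ X] {θ : ℝ} {S : Set (Finset ℕ+)}
  {e : UnconditionalSchauderBasis ℕ+ ℝ X} {f : StrongDual ℝ X} {x : X}

lemma abs_sign_le_one (t : ℝ) : |(SignType.sign t : ℝ)| ≤ 1 := by
  rcases lt_trichotomy t 0 with h | h | h <;> simp [h]

lemma subset_and_card_le_of_card_sdiff_le {α : Type*} [DecidableEq α] {D T : Finset α} {n : ℕ}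
    (hD : n + T.card ≤ D.card) (hDT : (D \ T).card ≤ n) : T ⊆ D ∧ D.card ≤ n + T.card := by
  have hadd := Finset.card_sdiff_add_card_inter D T
  have hinter : D ∩ T = T :=
    Finset.eq_of_subset_of_card_le Finset.inter_subset_right (by lia)
  exact ⟨Finset.inter_eq_right.1 hinter, by rw [hinter] at hadd; lia⟩

lemma exists_abs_eq_and_le_abs_add {r : ℝ} (hr : 0 ≤ r) (c : ℝ) :
    ∃ t : ℝ, |t| = r ∧ r ≤ |c + t| := by
  obtain hc | hc := le_total 0 c
  · exact ⟨r, abs_of_nonneg hr, le_abs.2 (.inl (by linarith))⟩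
  · exact ⟨-r, by rw [abs_neg, abs_of_nonneg hr], le_abs.2 (.inr (by linarith))⟩

namespace IsTsirelsonBasis

lemma card_le_two_of_isFlat_half (hT : IsTsirelsonBasis (1 / 2) (Schreier 1) e)
    (hf : IsFlat f x (1 / 2)) (hfin : ∀ᶠ i in cofinite, f (e i) = 0) {B : Finset ℕ+}
    (hB : ∀ b ∈ B, 5 ≤ (b : ℕ)) (hx : ∀ b ∈ B, |e.coord b x| = 1 / 2) : B.card ≤ 2 := by
  by_contra! hcard
  obtain ⟨B, hBB, hB3⟩ := Finset.exists_subset_card_eq hcard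
  obtain ⟨C, hC2, hC⟩ := exists_card_eq_of_eventually_cofinite
    (hfin.and ((eventually_cofinite_lt_pnat 4).and B.eventually_cofinite_notMem)) 2
  choose t ht using fun b =>
    exists_abs_eq_and_le_abs_add (r := 2 / 5) (by norm_num) (e.coord b x)
  set v := ∑ b ∈ C, t b • e b
  have hfv : f v = 0 := by
    rw [map_sum]
    exact Finset.sum_eq_zero fun b hb => by rw [map_smul, (hC b hb).1, smul_zero]
  have hv : ‖v‖ ≤ 2 / 5 :=
    hT.norm_sum_smul_le (by norm_num [hC2]) (by norm_num) fun b _ => (ht b).1.le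
  have hdisj : Disjoint B C := Finset.disjoint_right.2 fun b hb => (hC b hb).2.2
  have hS : B.disjUnion C hdisj ∈ Schreier 1 := by
    intro b hb
    rw [Finset.card_disjUnion, hB3, hC2]
    rcases Finset.mem_disjUnion.1 hb with hb | hb
    exacts [hB b (hBB hb), (hC b hb).2.1]
  have hle := hT.mul_sum_abs_coord_le_norm hS (x + v)
  have hsumB : ∑ b ∈ B, |e.coord b (x + v)| = 3 / 2 := by
    rw [Finset.sum_congr rfl (g := fun _ => (1 / 2 : ℝ)), Finset.sum_const, hB3]
    · norm_num
    · intro b hb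
      rw [map_add, coord_sum_smul, if_neg (Finset.disjoint_left.1 hdisj hb), add_zero,
        hx b (hBB hb)]
  have hsumC : 2 • (2 / 5 : ℝ) ≤ ∑ b ∈ C, |e.coord b (x + v)| := by
    rw [← hC2]
    refine Finset.card_nsmul_le_sum _ _ _ fun b hb => ?_
    rw [map_add, coord_sum_smul, if_pos hb]
    exact (ht b).2
  rw [hf.norm_add_eq_one hfv (by linarith), Finset.sum_disjUnion, hsumB] at hle
  norm_num at hle hsumC
  linarith

lemma sum_abs_apply_basis_le (hT : IsTsirelsonBasis (1 / 2) (Schreier 1) e)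
    (hf : IsSupportFunctional f x) {D : Finset ℕ+} (hD3 : 3 ∈ D) (hD : D.card ≤ 4) :
    ∑ b ∈ D, |f (e b)| ≤ 3 / 2 := by
  have herase : (D.erase 3).card ≤ 3 := by
    rw [Finset.card_erase_of_mem hD3]
    lia
  have hnorm := hT.norm_sum_insert_smul_le (p := 3) herase le_rfl (by norm_num)
    fun b => abs_sign_le_one (f (e b))
  rw [Finset.insert_erase hD3] at hnorm
  calc ∑ b ∈ D, |f (e b)| = f (∑ b ∈ D, (SignType.sign (f (e b)) : ℝ) • e b) := by simp
    _ ≤ _ := hf.apply_le_norm _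
    _ ≤ 3 / 2 := hnorm.trans (by norm_num)

lemma eventually_apply_basis_eq_zero (hT : IsTsirelsonBasis θ S e)
    (hx : ∀ i, f (e i) ≠ 0 → |e.coord i x| = 1 / 2) : ∀ᶠ i in cofinite, f (e i) = 0 := by
  have hzero := (e.expansion x).summable.tendsto_cofinite_zero.norm
  simp only [norm_smul, Real.norm_eq_abs, hT.norm_basis, mul_one, norm_zero] at hzero
  filter_upwards [hzero.eventually_lt_const (by norm_num : (0 : ℝ) < 1 / 2)] with i hi
  exact not_not.1 fun hne => hi.ne (hx i hne)

lemma sum_abs_apply_basis_eq_two (hT : IsTsirelsonBasis θ S e) (hf : IsSupportFunctional f x)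
    {D : Finset ℕ+} (hD : ∀ i ∉ D, f (e i) = 0) (hx : ∀ i ∈ D, |e.coord i x| = 1 / 2) :
    ∑ i ∈ D, |f (e i)| = 2 := by
  have hsum : ∑ i ∈ D, e.coord i x * f (e i) = 1 :=
    (hasSum_sum_of_ne_finset_zero fun i hi => by rw [hD i hi, mul_zero]).unique hf.hasSum
  have hhalf : ∑ i ∈ D, e.coord i x * f (e i) = ∑ i ∈ D, 1 / 2 * |f (e i)| :=
    Finset.sum_congr rfl fun i hi => by
      rw [← abs_of_nonneg (hT.coord_mul_apply_basis_nonneg hf i), abs_mul, hx i hi]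
  rw [hhalf, ← Finset.mul_sum] at hsum
  linarith

lemma three_le_of_apply_basis_ne_zero (hT : IsTsirelsonBasis (1 / 2) (Schreier 1) e)
    (hf : IsSupportFunctional f x) {i : ℕ+} (hi : |e.coord i x| < 1) (hfi : f (e i) ≠ 0) :
    3 ≤ (i : ℕ) := by
  by_contra! hlt
  have hle : (i : ℝ) ≤ 2 := mod_cast Nat.le_of_lt_succ hlt
  exact hfi (hT.apply_basis_eq_zero hf hi (by linarith))

lemma exists_one_le_abs_coord_of_isFlat_half (hT : IsTsirelsonBasis (1 / 2) (Schreier 1) e)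
    (hf : IsFlat f x (1 / 2)) : ∃ i, 1 ≤ |e.coord i x| := by
  by_contra! hlt
  have hx (i) (hi : f (e i) ≠ 0) : |e.coord i x| = 1 / 2 :=
    ((hT.abs_coord_le_of_isFlat hf (hlt i)).trans_eq (by norm_num)).antisymm
      (hT.le_abs_coord_of_isFlat hf (hlt i) hi)
  have hfin := hT.eventually_apply_basis_eq_zero hx
  set D := (eventually_cofinite.1 hfin).toFinset
  have hD (i) : i ∈ D ↔ f (e i) ≠ 0 := by simp [D]
  have hsum := hT.sum_abs_apply_basis_eq_two hf.toIsSupportFunctional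
    (fun i hi => not_not.1 (mt (hD i).2 hi)) fun i hi => hx i ((hD i).1 hi)
  have hcard : 4 ≤ D.card := by
    have hle := Finset.sum_le_card_nsmul D (fun i => |f (e i)|) (1 / 2)
      fun i _ => hT.abs_apply_basis_le hf.toIsSupportFunctional (hlt i)
    rw [hsum, nsmul_eq_mul] at hle
    exact_mod_cast (by linarith : (4 : ℝ) ≤ D.card)
  have hlarge : (D \ {3, 4}).card ≤ 2 := by
    refine hT.card_le_two_of_isFlat_half hf hfin (fun i hi => ?_) fun i hi => ?_
    all_goals obtain ⟨hiD, hi34⟩ := Finset.mem_sdiff.1 hi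
    · have h3 := hT.three_le_of_apply_basis_ne_zero hf.toIsSupportFunctional (hlt i) ((hD i).1 hiD)
      simp only [Finset.mem_insert, Finset.mem_singleton, not_or, ← PNat.coe_inj,
        PNat.val_ofNat] at hi34
      lia
    · exact hx i ((hD i).1 hiD)
  obtain ⟨h34, hcard_le⟩ := subset_and_card_le_of_card_sdiff_le (T := {3, 4}) hcard hlarge
  have hsum_le :=
    hT.sum_abs_apply_basis_le hf.toIsSupportFunctional (h34 (by simp)) hcard_le
  linarith

lemma exists_abs_coord_eq_one_of_isFlat (hT : IsTsirelsonBasis θ (Schreier 1) e)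
    (hf : IsFlat f x (1 - θ)) : ∃ i, |e.coord i x| = 1 := by
  have hle (i) : |e.coord i x| ≤ 1 := (hT.abs_coord_le_norm i x).trans hf.norm_eq_one.le
  by_contra! hne
  have hlt (i) : |e.coord i x| < 1 := (hle i).lt_of_ne (hne i)
  obtain ⟨a, ha⟩ := hf.exists_apply_basis_ne_zero (e := e)
  have hθ : θ = 1 / 2 := by
    linarith [hT.le_half, hT.abs_coord_le_of_isFlat hf (hlt a),
      hT.le_abs_coord_of_isFlat hf (hlt a) ha]
  subst hθ
  obtain ⟨i, hi⟩ := hT.exists_one_le_abs_coord_of_isFlat_half (by convert hf using 1; norm_num)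
  exact (hlt i).not_ge hi

end IsTsirelsonBasis

end HalfFlatPoint

section PolePair

/-- `p` and `q` are antipodal points of the unit sphere around which the metric looks as it does
around `±e i` in a Tsirelson space. The conditions involve distances only, so that surjective
isometries preserve them. -/
structure IsPolePair {M : Type*} [Dist M] (r : ℝ) (p q : M) : Prop where
  dist_eq_two : ∀ g h, dist g q = 2 → dist h p = 2 → dist g h = 2
  dist_left_le_one : ∀ g, dist g q = 2 → dist g p ≤ 1
  dist_right_le_one : ∀ g, dist g p = 2 → dist g q ≤ 1
  dist_right_eq_two : ∀ g, dist g p < r → dist g q = 2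

lemma IsPolePair.map {M N : Type*} [PseudoMetricSpace M] [PseudoMetricSpace N] {r : ℝ} {p q : M}
    (h : IsPolePair r p q) (U : M ≃ᵢ N) : IsPolePair r (U p) (U q) where
  dist_eq_two := by simpa [U.surjective.forall, U.dist_eq] using h.dist_eq_two
  dist_left_le_one := by simpa [U.surjective.forall, U.dist_eq] using h.dist_left_le_one
  dist_right_le_one := by simpa [U.surjective.forall, U.dist_eq] using h.dist_right_le_one
  dist_right_eq_two := by simpa [U.surjective.forall, U.dist_eq] using h.dist_right_eq_two

lemma dist_sphere_eq {X : Type*} [SeminormedAddCommGroup X] (g h : sphere (0 : X) 1) :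
    dist g h = ‖(g : X) - h‖ := by
  rw [Subtype.dist_eq, dist_eq_norm]

lemma dist_neg_sphere {X : Type*} [SeminormedAddCommGroup X] (g h : sphere (0 : X) 1) :
    dist (-g) h = ‖(g : X) + h‖ := by
  rw [dist_sphere_eq, coe_neg_sphere, ← norm_neg, neg_sub', neg_neg, sub_neg_eq_add]

variable {X : Type*} [NormedAddCommGroup X] [NormedSpace ℝ X] {θ r σ : ℝ}
  {S : Set (Finset ℕ+)} {e : UnconditionalSchauderBasis ℕ+ ℝ X} {p q : sphere (0 : X) 1}
  {y z : X} {i j : ℕ+}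

lemma dist_neg_self_sphere (g : sphere (0 : X) 1) : dist (-g) g = 2 := by
  rw [dist_neg_sphere, ← two_smul ℝ, norm_smul, norm_eq_of_mem_sphere]
  norm_num

namespace IsPolePair

lemma dist_neg_left_eq_two (h : IsPolePair r p q) {g : sphere (0 : X) 1} (hg : dist g q = 2) :
    dist (-g) p = 2 := by
  have := h.dist_eq_two g (-p) hg (dist_neg_self_sphere p)
  rwa [dist_comm, dist_neg_sphere, add_comm, ← dist_neg_sphere] at this

lemma dist_right_eq_two_of_norm_add (h : IsPolePair r p q) {g : sphere (0 : X) 1}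
    (hg : ‖(g : X) + p‖ = 2) : dist g q = 2 := by
  have := h.dist_eq_two (-q) (-g) (dist_neg_self_sphere q) (by rwa [dist_neg_sphere])
  rwa [dist_neg_sphere, coe_neg_sphere, ← sub_eq_add_neg, norm_sub_rev, ← dist_sphere_eq] at this

lemma isFlat (h : IsPolePair r p q) {f : StrongDual ℝ X} (hf : IsSupportFunctional f (p : X)) :
    IsFlat f (p : X) r := by
  refine hf.isFlat fun g g' hg hg' hgp hgp' => ?_
  lift g to sphere (0 : X) 1 using mem_sphere_zero_iff_norm.2 hg
  lift g' to sphere (0 : X) 1 using mem_sphere_zero_iff_norm.2 hg'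
  rw [← dist_sphere_eq] at hgp hgp'
  rw [add_comm, ← dist_neg_sphere, dist_comm]
  exact h.dist_eq_two g (-g') (h.dist_right_eq_two g hgp)
    (h.dist_neg_left_eq_two (h.dist_right_eq_two g' hgp'))

end IsPolePair

namespace IsTsirelsonBasis

lemma norm_add_eq_two_of_coord_eq (hT : IsTsirelsonBasis θ S e) (hy : ‖y‖ = 1) (hz : ‖z‖ = 1)
    (hcy : |e.coord i y| = 1) (hcz : e.coord i z = e.coord i y) : ‖y + z‖ = 2 := by
  refine le_antisymm ((norm_add_le y z).trans_eq (by rw [hy, hz]; norm_num)) ?_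
  have hle := hT.abs_coord_le_norm i (y + z)
  rwa [map_add, hcz, ← two_mul, abs_mul, hcy, abs_two, mul_one] at hle

lemma norm_add_smul_eq_two_iff (hT : IsTsirelsonBasis θ S e) (hy : ‖y‖ = 1) (hσ : |σ| = 1) :
    ‖y + σ • e i‖ = 2 ↔ e.coord i y = σ := by
  refine ⟨fun h => ?_, fun h => hT.norm_add_eq_two_of_coord_eq (i := i) hy ?_ (h ▸ hσ) ?_⟩
  · have hcoord := abs_le.1 ((hT.abs_coord_le_norm i y).trans hy.le)
    have hle := hT.norm_add_smul_le i σ y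
    rw [h, hy, hσ, le_max_iff, or_iff_left (by linarith [hT.le_half])] at hle
    rcases eq_or_eq_neg_of_abs_eq hσ with rfl | rfl <;> rcases le_abs.1 hle with hle | hle <;>
      linarith
  · simp [norm_smul, hT.norm_basis, hσ]
  · simp [coord_apply_basis, h]

lemma coord_eq_one_of_norm_sub_lt (hT : IsTsirelsonBasis θ S e) (hy : ‖y‖ = 1)
    (hlt : ‖y - e i‖ < 1 - θ) : e.coord i y = 1 := by
  have hcoord := (le_abs_self _).trans ((hT.abs_coord_le_norm i y).trans hy.le)
  have hdiff := abs_le.1 (hT.abs_coord_le_norm i (y - e i))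
  have hle := hT.norm_add_smul_le i 1 (y - e i)
  have hθ := hT.pos
  simp only [map_sub, coord_apply_basis, if_true] at hdiff hle
  rw [one_smul, sub_add_cancel, sub_add_cancel, hy, abs_one, mul_one, le_max_iff,
    or_iff_left (by linarith), abs_of_nonneg (by linarith)] at hle
  exact hcoord.antisymm hle

lemma norm_sub_coord_smul_le (hT : IsTsirelsonBasis θ S e) (i : ℕ+) (y : X) :
    ‖y - e.coord i y • e i‖ ≤ ‖y‖ := by
  have havg : (2 : ℝ) • (y - e.coord i y • e i) = y + (y - (2 * e.coord i y) • e i) := by module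
  have htri := norm_add_le y (y - (2 * e.coord i y) • e i)
  rw [← havg, hT.norm_sub_two_coord_smul, norm_smul_of_nonneg zero_le_two] at htri
  linarith

lemma isPolePair_basis (hT : IsTsirelsonBasis θ S e) (hp : (p : X) = e i) :
    IsPolePair (1 - θ) p (-p) := by
  have hnorm (g : sphere (0 : X) 1) : ‖(g : X)‖ = 1 := norm_eq_of_mem_sphere g
  have hneg (g : sphere (0 : X) 1) : dist g (-p) = 2 ↔ e.coord i g = 1 := by
    rw [dist_comm, dist_neg_sphere, add_comm, hp,
      ← hT.norm_add_smul_eq_two_iff (hnorm g) abs_one, one_smul]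
  have hpos (g : sphere (0 : X) 1) : dist g p = 2 ↔ e.coord i g = -1 := by
    rw [dist_sphere_eq, hp, sub_eq_add_neg, ← neg_one_smul ℝ,
      hT.norm_add_smul_eq_two_iff (hnorm g) (by simp)]
  refine ⟨fun g h hg hh => ?_, fun g hg => ?_, fun g hg => ?_, fun g hg => ?_⟩
  · rw [hneg] at hg
    rw [hpos] at hh
    rw [dist_sphere_eq, sub_eq_add_neg, ← coe_neg_sphere]
    exact hT.norm_add_eq_two_of_coord_eq (i := i) (hnorm g) (hnorm _) (by simp [hg])
      (by simp [hg, hh])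
  · have hle := hT.norm_sub_coord_smul_le i (g : X)
    rwa [(hneg g).1 hg, one_smul, ← hp, ← dist_sphere_eq, hnorm] at hle
  · have hle := hT.norm_sub_coord_smul_le i (g : X)
    rwa [(hpos g).1 hg, neg_one_smul, ← hp, sub_neg_eq_add, ← dist_neg_sphere,
      dist_neg_sphere, add_comm, ← dist_neg_sphere, dist_comm, hnorm] at hle
  · rw [dist_sphere_eq, hp] at hg
    exact (hneg g).2 (hT.coord_eq_one_of_norm_sub_lt (hnorm g) hg)

lemma norm_smul_add_smul_eq_one (hT : IsTsirelsonBasis θ S e) (hij : i ≠ j) {τ : ℝ}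
    (hσ : |σ| = 1) (hτ : |τ| = 1) : ‖σ • e i + τ • e j‖ = 1 := by
  refine le_antisymm (hT.norm_smul_add_smul_le hij hσ.le hτ.le) ?_
  simpa [coord_apply_basis, hij, hσ] using hT.abs_coord_le_norm i (σ • e i + τ • e j)

lemma eq_smul_basis_of_forall_norm_sub_le (hT : IsTsirelsonBasis θ S e) (hσ : |σ| = 1)
    (hz : ‖z‖ = 1) (h : ∀ y, ‖y‖ = 1 → e.coord j y = σ → ‖y - z‖ ≤ 1) : z = σ • e j := by
  have hzero (l : ℕ+) (hl : l ≠ j) : e.coord l z = 0 := by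
    have hle (τ : ℝ) (hτ : |τ| = 1) : |τ - e.coord l z| ≤ 1 := by
      have hy := h _ (hT.norm_smul_add_smul_eq_one hl.symm hσ hτ)
        (by simp [coord_apply_basis, hl.symm])
      simpa [coord_apply_basis, hl] using (hT.abs_coord_le_norm l _).trans hy
    linarith [le_of_abs_le (hle 1 abs_one), neg_le_of_abs_le (hle (-1) (by simp)),
      neg_le_of_abs_le (hle 1 abs_one), le_of_abs_le (hle (-1) (by simp))]
  have hz_eq : z = e.coord j z • e j := eq_of_coord_eq (b := e) fun l => by
    rcases eq_or_ne l j with rfl | hl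
    · simp [coord_apply_basis]
    · simp [coord_apply_basis, hl, hzero l hl]
  have habs : |e.coord j z| = 1 := by
    rw [← hz, hz_eq]
    simp [norm_smul, hT.norm_basis, coord_apply_basis]
  have hclose := (hT.abs_coord_le_norm j _).trans
    (h (σ • e j) (by simp [norm_smul, hT.norm_basis, hσ]) (by simp [coord_apply_basis]))
  rw [hz_eq]
  congr 1
  simp only [map_sub, map_smul, coord_apply_basis, if_true, smul_eq_mul, mul_one] at hclose
  rcases eq_or_eq_neg_of_abs_eq hσ with h1 | h1 <;> rcases eq_or_eq_neg_of_abs_eq habs with h2 | h2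
    <;> rw [h1, h2] at hclose <;> norm_num at hclose <;> rw [h1, h2]

end IsTsirelsonBasis

lemma IsPolePair.exists_eq_smul_basis (hT : IsTsirelsonBasis θ (Schreier 1) e)
    (h : IsPolePair (1 - θ) p q) :
    ∃ (j : ℕ+) (σ : ℝ), |σ| = 1 ∧ (p : X) = σ • e j ∧ (q : X) = -(σ • e j) := by
  have hp := norm_eq_of_mem_sphere p
  obtain ⟨f, hf⟩ := exists_isSupportFunctional hp
  obtain ⟨j, hj⟩ := hT.exists_abs_coord_eq_one_of_isFlat (h.isFlat hf)
  have hface (y : sphere (0 : X) 1) (hy : e.coord j y = e.coord j p) : dist y q = 2 :=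
    h.dist_right_eq_two_of_norm_add
      (hT.norm_add_eq_two_of_coord_eq (norm_eq_of_mem_sphere y) hp (hy ▸ hj) hy.symm)
  refine ⟨j, e.coord j p, hj, ?_, ?_⟩
  · refine hT.eq_smul_basis_of_forall_norm_sub_le hj hp fun y hy hyj => ?_
    lift y to sphere (0 : X) 1 using mem_sphere_zero_iff_norm.2 hy
    rw [← dist_sphere_eq]
    exact h.dist_left_le_one y (hface y hyj)
  · rw [← neg_eq_iff_eq_neg, ← coe_neg_sphere]
    refine hT.eq_smul_basis_of_forall_norm_sub_le hj (norm_eq_of_mem_sphere _) fun y hy hyj => ?_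
    lift y to sphere (0 : X) 1 using mem_sphere_zero_iff_norm.2 hy
    rw [coe_neg_sphere, sub_neg_eq_add, ← dist_neg_sphere]
    exact h.dist_right_le_one (-y) (h.dist_neg_left_eq_two (hface y hyj))

end PolePair

section SignedPermutation

variable {X : Type*} [NormedAddCommGroup X] [NormedSpace ℝ X] {θ τ : ℝ} {S : Set (Finset ℕ+)}
  {e : UnconditionalSchauderBasis ℕ+ ℝ X} {U : sphere (0 : X) 1 ≃ᵢ sphere (0 : X) 1}
  {π : Equiv.Perm ℕ+} {ε : ℕ+ → ℝ} {i : ℕ+}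

/-- `U` maps `±e i` to `±ε i • e (π i)`, with signs `ε i`. The multiple `τ • e i` is compared with a
variable point `z` of the sphere because `U` is only defined there. -/
structure IsSignedPermutation (e : UnconditionalSchauderBasis ℕ+ ℝ X)
    (U : sphere (0 : X) 1 ≃ᵢ sphere (0 : X) 1) (π : Equiv.Perm ℕ+) (ε : ℕ+ → ℝ) : Prop where
  abs_sign : ∀ i, |ε i| = 1
  apply_eq : ∀ i τ (z : sphere (0 : X) 1), |τ| = 1 → (z : X) = τ • e i →
    (U z : X) = (τ * ε i) • e (π i)

lemma eq_of_smul_basis_eq {ι : Type*} {b : UnconditionalSchauderBasis ι ℝ X} {i j : ι} {s t : ℝ}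
    (hs : s ≠ 0) (h : s • b i = t • b j) : i = j := by
  classical
  by_contra hij
  simpa [coord_apply_basis, hij, hs] using congrArg (b.coord i) h

namespace IsTsirelsonBasis

lemma smul_basis_mem_sphere (hT : IsTsirelsonBasis θ S e) (i : ℕ+) (hτ : |τ| = 1) :
    τ • e i ∈ sphere (0 : X) 1 := by
  simp [norm_smul, hT.norm_basis, hτ]

lemma exists_apply_smul_basis (hT : IsTsirelsonBasis θ (Schreier 1) e)
    (U : sphere (0 : X) 1 ≃ᵢ sphere (0 : X) 1) (i : ℕ+) :
    ∃ (j : ℕ+) (σ : ℝ), |σ| = 1 ∧ ∀ τ (z : sphere (0 : X) 1), |τ| = 1 → (z : X) = τ • e i →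
      (U z : X) = (τ * σ) • e j := by
  set p : sphere (0 : X) 1 := ⟨e i, by simp [hT.norm_basis]⟩
  obtain ⟨j, σ, hσ, hp, hneg⟩ :=
    ((hT.isPolePair_basis (p := p) (i := i) rfl).map U).exists_eq_smul_basis hT
  refine ⟨j, σ, hσ, fun τ z hτ hz => ?_⟩
  rcases eq_or_eq_neg_of_abs_eq hτ with rfl | rfl
  · rw [show z = p from Subtype.ext (by simpa using hz), hp, one_mul]
  · rw [show z = -p from Subtype.ext (by simpa using hz), hneg, neg_one_mul, neg_smul]

lemma exists_isSignedPermutation (hT : IsTsirelsonBasis θ (Schreier 1) e)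
    (U : sphere (0 : X) 1 ≃ᵢ sphere (0 : X) 1) : ∃ π ε, IsSignedPermutation e U π ε := by
  choose π ε hε hU using hT.exists_apply_smul_basis U
  choose π' ε' hε' hU' using hT.exists_apply_smul_basis U.symm
  have hleft (i) : π' (π i) = i := by
    let z : sphere (0 : X) 1 := ⟨_, hT.smul_basis_mem_sphere i abs_one⟩
    have hz := hU' _ _ (U z) (by simpa using hε i) (hU i 1 z abs_one rfl)
    rw [U.symm_apply_apply] at hz
    exact (eq_of_smul_basis_eq one_ne_zero hz).symm
  have hright (j) : π (π' j) = j := by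
    let z : sphere (0 : X) 1 := ⟨_, hT.smul_basis_mem_sphere j abs_one⟩
    have hz := hU _ _ (U.symm z) (by simpa using hε' j) (hU' j 1 z abs_one rfl)
    rw [U.apply_symm_apply] at hz
    exact (eq_of_smul_basis_eq one_ne_zero hz).symm
  exact ⟨⟨π, π', hleft, hright⟩, ε, hε, hU⟩

end IsTsirelsonBasis

namespace IsSignedPermutation

lemma mul_sign_self (h : IsSignedPermutation e U π ε) (i : ℕ+) : ε i * ε i = 1 := by
  rw [← abs_mul_abs_self, h.abs_sign, one_mul]

lemma abs_mul_sign (h : IsSignedPermutation e U π ε) (i : ℕ+) (hτ : |τ| = 1) : |τ * ε i| = 1 := by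
  rw [abs_mul, hτ, h.abs_sign, one_mul]

lemma norm_apply_add_smul (h : IsSignedPermutation e U π ε) (hT : IsTsirelsonBasis θ S e)
    (y : sphere (0 : X) 1) (i : ℕ+) (hτ : |τ| = 1) :
    ‖(U y : X) + (τ * ε i) • e (π i)‖ = ‖(y : X) + τ • e i‖ := by
  have hτ' : |-τ| = 1 := by rwa [abs_neg]
  let z : sphere (0 : X) 1 := ⟨_, hT.smul_basis_mem_sphere i hτ'⟩
  have hdist := U.dist_eq y z
  rw [dist_sphere_eq, dist_sphere_eq, h.apply_eq i (-τ) z hτ' rfl] at hdist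
  simpa [z, sub_eq_add_neg] using hdist

lemma coord_apply_eq (h : IsSignedPermutation e U π ε) (hT : IsTsirelsonBasis θ S e)
    {y : sphere (0 : X) 1} (hy : e.coord i y = τ) (hτ : |τ| = 1) :
    e.coord (π i) (U y) = τ * ε i := by
  rw [← hT.norm_add_smul_eq_two_iff (norm_eq_of_mem_sphere _) (h.abs_mul_sign i hτ),
    h.norm_apply_add_smul hT y i hτ, hT.norm_add_smul_eq_two_iff (norm_eq_of_mem_sphere y) hτ, hy]

lemma symm (h : IsSignedPermutation e U π ε) (hT : IsTsirelsonBasis θ S e) :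
    IsSignedPermutation e U.symm π.symm fun j => ε (π.symm j) := by
  refine ⟨fun j => h.abs_sign _, fun j τ z hτ hz => ?_⟩
  set i := π.symm j
  have hσ := h.abs_mul_sign i hτ
  let w : sphere (0 : X) 1 := ⟨_, hT.smul_basis_mem_sphere i hσ⟩
  have hw : U w = z := Subtype.ext <| by
    rw [h.apply_eq i _ w hσ rfl, hz, mul_assoc, h.mul_sign_self, mul_one, π.apply_symm_apply]
  rw [← hw, U.symm_apply_apply]

end IsSignedPermutation

end SignedPermutation

section LowIndices

variable {X : Type*} [NormedAddCommGroup X] [NormedSpace ℝ X] {θ σ τ : ℝ}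
  {e : UnconditionalSchauderBasis ℕ+ ℝ X} {U : sphere (0 : X) 1 ≃ᵢ sphere (0 : X) 1}
  {π : Equiv.Perm ℕ+} {ε : ℕ+ → ℝ} {p j : ℕ+} {y z : X} {C : Finset ℕ+}

lemma exists_card_eq_disjoint_lt_apply (π : Equiv.Perm ℕ+) (m : ℕ) (F : Finset ℕ+) :
    ∃ C : Finset ℕ+, C.card = m ∧ Disjoint F C ∧ ∀ b ∈ C, m < (π b : ℕ) := by
  have hlt := π.injective.tendsto_cofinite.eventually (eventually_cofinite_lt_pnat m)
  obtain ⟨C, hCm, hC⟩ :=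
    exists_card_eq_of_eventually_cofinite (F.eventually_cofinite_notMem.and hlt) m
  exact ⟨C, hCm, Finset.disjoint_right.2 fun b hb => (hC b hb).1, fun b hb => (hC b hb).2⟩

lemma eq_of_max_one_add_eq {s t : ℝ} (hadd : max 1 (1 + s) = max 1 (1 + t))
    (hsub : max 1 (1 - s) = max 1 (1 - t)) : s = t := by
  grind

namespace IsTsirelsonBasis

lemma norm_basis_add_eq_one (hT : IsTsirelsonBasis θ (Schreier 1) e) (hp : θ * p ≤ 1)
    (hz : e.coord p z = 0) (hz1 : ‖z‖ ≤ 1) : ‖e p + z‖ = 1 := by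
  refine le_antisymm ?_ ?_
  · simpa [hz, add_comm, hz1] using hT.norm_add_smul_le_of_mul_le_one hp 1 z
  · simpa [hz, coord_apply_basis] using hT.abs_coord_le_norm p (e p + z)

lemma norm_smul_add_add_smul (hT : IsTsirelsonBasis θ (Schreier 1) e) (hp : θ * p ≤ 1)
    (hz : e.coord p z = 0) (hzθ : ‖z‖ ≤ 1 - θ) (hj : j ≠ p) (hσ : |σ| = 1) (hτ : |τ| = 1) :
    ‖σ • e p + z + τ • e j‖ = max 1 (1 + τ * e.coord j z) := by
  have hzj := (hT.abs_coord_le_norm j z).trans hzθ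
  have habs : |e.coord j z + τ| = 1 + τ * e.coord j z := by
    have hθ := hT.pos
    rcases eq_or_eq_neg_of_abs_eq hτ with rfl | rfl
    · rw [abs_of_nonneg (by linarith [neg_le_of_abs_le hzj])]
      ring
    · rw [abs_of_nonpos (by linarith [le_of_abs_le hzj])]
      ring
  refine le_antisymm ?_ (max_le ?_ ?_)
  · have hle := hT.norm_add_smul_le_of_mul_le_one hp σ (z + τ • e j)
    simp only [map_add, map_smul, hz, coord_apply_basis, if_neg hj.symm, smul_zero, zero_add,
      hσ] at hle
    rw [add_assoc, add_comm]
    refine hle.trans (max_le (le_max_left _ _) ((hT.norm_add_smul_le j τ z).trans ?_))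
    rw [habs, hτ, mul_one]
    exact max_le (le_max_right _ _) ((by linarith : ‖z‖ + θ ≤ 1).trans (le_max_left _ _))
  · simpa [coord_apply_basis, hz, hj.symm, hσ] using
      hT.abs_coord_le_norm p (σ • e p + z + τ • e j)
  · simpa [coord_apply_basis, hj, habs] using hT.abs_coord_le_norm j (σ • e p + z + τ • e j)

lemma mul_card_succ_le_norm (hT : IsTsirelsonBasis θ (Schreier 1) e) (hpC : p ∉ C)
    (hπ : ∀ b ∈ insert p C, C.card < (π b : ℕ))
    (hy : ∀ b ∈ insert p C, |e.coord (π b) y| = 1) : θ * (C.card + 1 : ℕ) ≤ ‖y‖ := by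
  have hcard := Finset.card_insert_of_notMem hpC
  have hS : (insert p C).map π.toEmbedding ∈ Schreier 1 := by
    rw [Schreier, Set.mem_ofPred_eq, Finset.card_map, hcard, Finset.forall_mem_map]
    exact hπ
  have hle := hT.mul_sum_abs_coord_le_norm hS y
  simp only [Finset.sum_map, Equiv.coe_toEmbedding] at hle
  rwa [Finset.sum_congr rfl hy, Finset.sum_const, hcard, nsmul_one] at hle

end IsTsirelsonBasis

namespace IsSignedPermutation

lemma mul_apply_le_one (h : IsSignedPermutation e U π ε) (hT : IsTsirelsonBasis θ (Schreier 1) e)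
    (hp : θ * p ≤ 1) : θ * π p ≤ 1 := by
  by_contra! hlt
  set K := ⌊θ⁻¹⌋₊
  have hK : θ * K ≤ 1 := by
    simpa [hT.pos.ne'] using
      mul_le_mul_of_nonneg_left (Nat.floor_le (inv_nonneg.2 hT.pos.le)) hT.pos.le
  have hK' : 1 < θ * (K + 1 : ℕ) := by
    simpa [hT.pos.ne'] using mul_lt_mul_of_pos_left (Nat.lt_floor_add_one θ⁻¹) hT.pos
  have hπp : K < (π p : ℕ) := by
    exact_mod_cast lt_of_mul_lt_mul_left (hK.trans_lt hlt) hT.pos.le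
  obtain ⟨C, hCK, hpC, hCπ⟩ := exists_card_eq_disjoint_lt_apply π K {p}
  rw [Finset.disjoint_singleton_left] at hpC
  have hsum : ‖∑ b ∈ C, (1 : ℝ) • e b‖ ≤ 1 :=
    hT.norm_sum_smul_le (hCK.symm ▸ hK) zero_le_one fun _ _ => abs_one.le
  have hunit := hT.norm_basis_add_eq_one hp (by simp only [coord_sum_smul, if_neg hpC]) hsum
  let y : sphere (0 : X) 1 := ⟨_, mem_sphere_zero_iff_norm.2 hunit⟩
  have hle := hT.mul_card_succ_le_norm (y := (U y : X)) (π := π) hpC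
    (by simpa [hCK, hπp] using hCπ) fun b hb => by
      have hy : e.coord b y = 1 := by
        rcases Finset.mem_insert.1 hb with rfl | hb
        · simp [y, coord_apply_basis, hpC]
        · have hbp : b ≠ p := ne_of_mem_of_not_mem hb hpC
          simp [y, coord_apply_basis, hb, hbp]
      rw [h.coord_apply_eq hT hy abs_one, one_mul, h.abs_sign]
  rw [hCK, norm_eq_of_mem_sphere] at hle
  exact hle.not_gt hK'

lemma exists_norm_eq_of_norm_le (h : IsSignedPermutation e U π ε)
    (hT : IsTsirelsonBasis θ (Schreier 1) e) (hp : θ * p ≤ 1) (hz : e.coord p z = 0)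
    (hzθ : ‖z‖ ≤ 1 - θ) :
    ∃ z' : X, ‖z'‖ = ‖z‖ ∧ ∀ j ≠ p, e.coord (π j) z' = ε j * e.coord j z := by
  have hunit := hT.norm_basis_add_eq_one hp hz (by linarith [hT.pos])
  let y : sphere (0 : X) 1 := ⟨_, mem_sphere_zero_iff_norm.2 hunit⟩
  have hcoord := h.coord_apply_eq (i := p) (τ := 1) hT (y := y)
    (by simp [y, coord_apply_basis, hz]) abs_one
  obtain ⟨z', hz'⟩ : ∃ z', (U y : X) = ε p • e (π p) + z' := ⟨_, (add_sub_cancel _ _).symm⟩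
  have hz'0 : e.coord (π p) z' = 0 := by simpa [hz', coord_apply_basis] using hcoord
  have hnorm : ‖z'‖ = ‖z‖ := by
    simpa [y, hz'] using h.norm_apply_add_smul hT y p (τ := -1) (by simp)
  refine ⟨z', hnorm, fun j hj => ?_⟩
  have hmax (τ : ℝ) (hτ : |τ| = 1) :
      max 1 (1 + τ * ε j * e.coord (π j) z') = max 1 (1 + τ * e.coord j z) := by
    rw [← hT.norm_smul_add_add_smul (h.mul_apply_le_one hT hp) hz'0 (hnorm.trans_le hzθ)
      (π.injective.ne hj) (h.abs_sign p) (h.abs_mul_sign j hτ), ← hz',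
      h.norm_apply_add_smul hT y j hτ, ← hT.norm_smul_add_add_smul hp hz hzθ hj abs_one hτ,
      one_smul]
  have heq : ε j * e.coord (π j) z' = e.coord j z :=
    eq_of_max_one_add_eq (by simpa using hmax 1 abs_one)
      (by simpa [sub_eq_add_neg] using hmax (-1) (by simp))
  rw [← heq, ← mul_assoc, h.mul_sign_self, one_mul]

lemma exists_norm_eq_of_coord_eq_zero (h : IsSignedPermutation e U π ε)
    (hT : IsTsirelsonBasis θ (Schreier 1) e) (hp : θ * p ≤ 1) (hz : e.coord p z = 0) :
    ∃ z' : X, ‖z'‖ = ‖z‖ ∧ ∀ j ≠ p, e.coord (π j) z' = ε j * e.coord j z := by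
  set s := 2 * (‖z‖ + 1)
  have hs : 0 < s := by positivity
  have hsmall : ‖s⁻¹ • z‖ ≤ 1 - θ := by
    rw [norm_smul_of_nonneg (inv_nonneg.2 hs.le), inv_mul_le_iff₀ hs]
    calc ‖z‖ ≤ s * (1 / 2) := by linarith
      _ ≤ s * (1 - θ) := by gcongr; linarith [hT.le_half]
  obtain ⟨z', hnorm, hcoord⟩ := h.exists_norm_eq_of_norm_le hT hp (by simp [hz]) hsmall
  refine ⟨s • z', ?_, fun j hj => ?_⟩
  · rw [norm_smul, hnorm, ← norm_smul, smul_inv_smul₀ hs.ne']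
  · rw [map_smul, hcoord j hj, map_smul, smul_eq_mul, smul_eq_mul]
    field_simp

lemma apply_le (h : IsSignedPermutation e U π ε) (hT : IsTsirelsonBasis θ (Schreier 1) e)
    (hp : 1 < θ * p) : π p ≤ p := by
  by_contra! hlt
  have hone : θ * (1 : ℕ+) ≤ 1 := by simpa using hT.le_one
  have hp1 : p ≠ 1 := fun hp1 => hone.not_gt (hp1 ▸ hp)
  obtain ⟨C, hCp, hdisj, hCπ⟩ := exists_card_eq_disjoint_lt_apply π p {1, p}
  obtain ⟨h1C, hpC⟩ : 1 ∉ C ∧ p ∉ C := by simpa using hdisj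
  have h1 : 1 ∉ insert p C := by simp [h1C, hp1.symm]
  obtain ⟨z', hnorm, hcoord⟩ := h.exists_norm_eq_of_coord_eq_zero hT hone
    (z := ∑ b ∈ insert p C, (1 : ℝ) • e b) (by simp only [coord_sum_smul, if_neg h1])
  have hle := hT.norm_sum_insert_smul_le (p := p) hCp.le le_rfl hp.le (t := 1) (by simp)
  have hge := hT.mul_card_succ_le_norm (y := z') (π := π) hpC
    (by simpa [hCp] using ⟨hlt, hCπ⟩) fun b hb => by
      rw [hcoord b (ne_of_mem_of_not_mem hb h1), coord_sum_smul, if_pos hb, mul_one, h.abs_sign]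
  rw [hnorm, hCp] at hge
  have hmono := hge.trans hle
  push_cast at hmono
  linarith [hT.pos]

lemma apply_eq_self (h : IsSignedPermutation e U π ε) (hT : IsTsirelsonBasis θ (Schreier 1) e)
    (hp : 1 < θ * p) : π p = p := by
  have hsymm := h.symm hT
  have hπp : 1 < θ * π p := by
    by_contra! hle
    exact hp.not_ge (by simpa using hsymm.mul_apply_le_one hT hle)
  exact (h.apply_le hT hp).antisymm (by simpa using hsymm.apply_le hT hπp)

end IsSignedPermutation

end LowIndices

theorem tsirelson_sphere_isometry_basis_S1_general {θ : ℝ} (hθ0 : 0 < θ) (hθ : θ ≤ 1 / 2)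
    {X : Type*} [NormedAddCommGroup X] [NormedSpace ℝ X] {e : ℕ+ → X}
    (hnorm : ∀ a : ℕ+ →₀ ℝ, ‖a.sum fun i c => c • e i‖ = tnorm θ (Schreier 1) a)
    (hexp : ∀ x : X, ∃! a : ℕ+ → ℝ, HasSum (fun i => a i • e i) x)
    {U : sphere (0 : X) 1 → sphere (0 : X) 1} (hU : Isometry U) (hUsurj : Surjective U) :
    ∃ (ε : ℕ+ → ℝ) (π : Equiv.Perm ℕ+),
      (∀ i, ε i = 1 ∨ ε i = -1) ∧
      (∀ i : ℕ+, 1 < θ * i → π i = i) ∧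
      ∀ (i : ℕ+) (h : e i ∈ sphere (0 : X) 1), (U ⟨e i, h⟩ : X) = ε i • e (π i) := by
  obtain ⟨b, rfl, hT⟩ := exists_isTsirelsonBasis hθ0 hθ hnorm hexp
  obtain ⟨π, ε, h⟩ := hT.exists_isSignedPermutation
    (.mk (Equiv.ofBijective U ⟨hU.injective, hUsurj⟩) hU)
  refine ⟨ε, π, fun i => eq_or_eq_neg_of_abs_eq (h.abs_sign i),
    fun i hi => h.apply_eq_self hT hi, fun i hi => ?_⟩
  rw [← one_mul (ε i)]
  exact h.apply_eq i 1 ⟨b i, hi⟩ abs_one (one_smul ℝ _).symm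

/-- For integer `θ⁻¹ = k ≥ 2`, every surjective isometry of the unit
sphere of `T[θ, S₁]` maps `eᵢ` to `εᵢ e_{π i}`, where `π` is a permutation of
`{1, …, θ⁻¹}` fixing all larger indices. -/
theorem tsirelson_sphere_isometry_basis_S1
    (θ : ℝ) (hθ0 : 0 < θ) (k : ℕ) (hk : 2 ≤ k) (hθk : θ⁻¹ = (k : ℝ))
    (X : Type*) [NormedAddCommGroup X] [NormedSpace ℝ X] (e : ℕ+ → X)
    (hX : IsTsirelsonSpace θ 1 X e)
    (U : Metric.sphere (0 : X) 1 → Metric.sphere (0 : X) 1)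
    (hU : Isometry U) (hUsurj : Function.Surjective U) :
    ∃ (ε : ℕ+ → ℝ) (π : Equiv.Perm ℕ+),
      (∀ i, ε i = 1 ∨ ε i = -1) ∧
      (∀ i : ℕ+, k < (i : ℕ) → π i = i) ∧
      ∀ (i : ℕ+) (h : e i ∈ Metric.sphere (0 : X) 1),
        (U ⟨e i, h⟩ : X) = ε i • e (π i) := by
  have hθ : θ ≤ 1 / 2 := by
    rw [one_div, le_inv_comm₀ hθ0 two_pos, hθk]
    exact_mod_cast hk
  obtain ⟨ε, π, hε, hπ, hUe⟩ := tsirelson_sphere_isometry_basis_S1_general hθ0 hθ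
    hX.norm_embed hX.expansion hU hUsurj
  refine ⟨ε, π, hε, fun i hi => hπ i ?_, hUe⟩
  rw [← inv_lt_iff_one_lt_mul₀' hθ0, hθk]
  exact_mod_cast hi
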